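/- arXiv:1701.07682 — 3 statements merged into one kernel-verified Lean document; each statement's English description precedes it below -/
import Mathlib

section
/- For every natural number n ≥ 1, the best Markov constants for the two Chebyshev weights satisfy 0.472135·n² ≤ c_n(0) ≤ 0.472871·(n+2)² and 0.248549·n² ≤ c_n(1) ≤ 0.250987·(n+4)². -/
open Polynomial Filter

/-- The weighted `L_2` norm with the Gegenbauer weight `w_lam(t) = (1-t^2)^(lam-1/2)`. -/
noncomputable def gegNorm (lam : ℝ) (f : ℝ → ℝ) : ℝ :=
  (∫ x in (-1:ℝ)..1, (f x) ^ 2 * (1 - x ^ 2) ^ (lam - 1/2)) ^ ((1:ℝ)/2)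

/-- The best Markov constant `c_n(lam)` in `‖p'‖ ≤ c_n(lam) ‖p‖` for polynomials of degree ≤ n. -/
noncomputable def markovConst (lam : ℝ) (n : ℕ) : ℝ :=
  sSup { r : ℝ | ∃ p : Polynomial ℝ, p ≠ 0 ∧ p.natDegree ≤ n ∧
    r = gegNorm lam (fun x => (Polynomial.derivative p).eval x) /
        gegNorm lam (fun x => p.eval x) }


namespace MarkovChebyshev

open Finset Polynomial.Chebyshev MeasureTheory

/-! ### Discrete weighted Hardy inequalities -/

section Discrete

variable {n : ℕ} {α ω φ h t : ℕ → ℝ} {μ : ℝ}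

lemma sum_sub_add_two_smul {M : Type*} [AddCommGroup M] [Module ℝ M] {B : ℕ → ℝ} {h : ℕ → M}
    (h0 : h 0 = 0) (hB : ∀ j, n ≤ j → B j = 0) :
    ∑ k ∈ range n, (B k - B (k + 2)) • h (k + 1) =
      ∑ j ∈ range n, B j • (h (j + 1) - h (j - 1)) := by
  have shifted : ∀ m, ∑ k ∈ range m, B (k + 2) • h (k + 1) =
      ∑ j ∈ range (m + 2), B j • h (j - 1) := by
    intro m
    induction m with
    | zero => simp [sum_range_succ, h0]
    | succ m ih => rw [sum_range_succ, ih, sum_range_succ _ (m + 2)]; simp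
  have := shifted n
  rw [sum_range_succ, sum_range_succ, hB n le_rfl, hB (n + 1) (by omega)] at this
  simp only [sub_smul, smul_sub, sum_sub_distrib, this]
  simp

/-- A positive supersolution `φ` gives a lower bound for the discrete Dirichlet form. -/
lemma mul_sum_le_of_supersolution (h0 : h 0 = 0)
    (hh : ∀ k, h (k + 1) = α k * (φ k - φ (k + 2))) (hα : ∀ k, 0 ≤ α k)
    (hpos : ∀ j < n, 0 < φ j) (hn : 0 ≤ φ n) (hn' : 0 ≤ φ (n + 1))
    (hsuper : ∀ j < n, μ * ω j * φ j ≤ h (j + 1) - h (j - 1))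
    (ht : ∀ j, n ≤ j → t j = 0) :
    μ * ∑ j ∈ range n, ω j * t j ^ 2 ≤ ∑ k ∈ range n, α k * (t k - t (k + 2)) ^ 2 := by
  have key := sum_sub_add_two_smul (n := n) (B := fun j => t j ^ 2 / φ j) h0
    (fun j hj => by simp [ht j hj])
  simp only [smul_eq_mul] at key
  calc μ * ∑ j ∈ range n, ω j * t j ^ 2
      ≤ ∑ j ∈ range n, t j ^ 2 / φ j * (h (j + 1) - h (j - 1)) := by
        rw [mul_sum]
        refine sum_le_sum fun j hj => ?_
        have hj := mem_range.1 hj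
        have hp := hpos j hj
        calc μ * (ω j * t j ^ 2) = t j ^ 2 / φ j * (μ * ω j * φ j) := by field_simp
          _ ≤ _ := mul_le_mul_of_nonneg_left (hsuper j hj) (by positivity)
    _ = ∑ k ∈ range n, (t k ^ 2 / φ k - t (k + 2) ^ 2 / φ (k + 2)) * h (k + 1) := key.symm
    _ ≤ _ := by
        refine sum_le_sum fun k hk => ?_
        have hk := mem_range.1 hk
        have hp := hpos k hk
        rw [hh, mul_comm, mul_assoc]
        refine mul_le_mul_of_nonneg_left ?_ (hα k)
        by_cases hk2 : k + 2 < n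
        · have hq := hpos _ hk2
          have : (t k - t (k + 2)) ^ 2 -
              (φ k - φ (k + 2)) * (t k ^ 2 / φ k - t (k + 2) ^ 2 / φ (k + 2)) =
              (φ (k + 2) * t k - φ k * t (k + 2)) ^ 2 / (φ k * φ (k + 2)) := by
            field_simp
            ring
          have : 0 ≤ (φ (k + 2) * t k - φ k * t (k + 2)) ^ 2 / (φ k * φ (k + 2)) := by
            positivity
          linarith
        · have hq : 0 ≤ φ (k + 2) := by
            obtain h | h : k + 2 = n ∨ k + 2 = n + 1 := by omega
            · rwa [h]
            · rwa [h]
          rw [ht (k + 2) (by omega)]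
          have : (φ k - φ (k + 2)) * (t k ^ 2 / φ k - 0 ^ 2 / φ (k + 2)) =
              t k ^ 2 - φ (k + 2) * (t k ^ 2 / φ k) := by
            field_simp
            ring
          rw [this, sub_zero]
          have : 0 ≤ φ (k + 2) * (t k ^ 2 / φ k) := by positivity
          linarith

/-- A subsolution `φ` that is nonpositive at `n + 1` gives an upper bound for the least
eigenvalue of the discrete Dirichlet form. -/
lemma exists_sum_le_of_subsolution (hn : 1 ≤ n) (h0 : h 0 = 0)
    (hh : ∀ k, h (k + 1) = α k * (φ k - φ (k + 2))) (hα : ∀ k, 0 ≤ α k)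
    (hφ0 : 0 < φ 0) (hφ1 : 0 < φ 1) (hn' : φ (n + 1) ≤ 0) (hω : ∀ j, 0 < ω j)
    (hsub : ∀ j < n, h (j + 1) - h (j - 1) ≤ μ * ω j * φ j) :
    ∃ t : ℕ → ℝ, (∀ j, n ≤ j → t j = 0) ∧ 0 < ∑ j ∈ range n, ω j * t j ^ 2 ∧
      ∑ k ∈ range n, α k * (t k - t (k + 2)) ^ 2 ≤ μ * ∑ j ∈ range n, ω j * t j ^ 2 := by
  set t : ℕ → ℝ := fun j => if j < n ∧ Odd (j + n) then max (φ j) 0 else 0 with ht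
  have ht0 : ∀ j, n ≤ j → t j = 0 := fun j hj => by simp [ht, not_lt.2 hj]
  refine ⟨t, ht0, ?_, ?_⟩
  · obtain ⟨j, hjn, hodd, hjφ⟩ : ∃ j, j < n ∧ Odd (j + n) ∧ 0 < φ j := by
      rcases Nat.even_or_odd n with he | ho
      · exact ⟨1, by obtain ⟨r, rfl⟩ := he; omega, by simpa [Nat.odd_add] using he, hφ1⟩
      · exact ⟨0, by omega, by simpa using ho, hφ0⟩
    refine sum_pos' (fun j _ => mul_nonneg (hω j).le (sq_nonneg _)) ⟨j, mem_range.2 hjn, ?_⟩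
    have : 0 < t j := by simp [ht, hjn, hodd, hjφ]
    have := hω j
    positivity
  · calc ∑ k ∈ range n, α k * (t k - t (k + 2)) ^ 2
        ≤ ∑ k ∈ range n, (t k - t (k + 2)) * h (k + 1) := by
          refine sum_le_sum fun k hk => ?_
          have hk := mem_range.1 hk
          rw [hh, mul_comm (t k - _), mul_assoc]
          refine mul_le_mul_of_nonneg_left ?_ (hα k)
          by_cases ho : Odd (k + n)
          · have h1 : t k = max (φ k) 0 := by simp [ht, hk, ho]
            have h2 : t (k + 2) = max (φ (k + 2)) 0 := by
              by_cases hk2 : k + 2 < n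
              · have : Odd (k + 2 + n) := by
                  rw [add_right_comm]; exact ho.add_even (by decide)
                simp [ht, hk2, this]
              · have : k + 2 = n + 1 := by
                  obtain ⟨r, hr⟩ := ho
                  omega
                rw [ht0 _ (by omega), this, max_eq_right hn']
            rw [h1, h2]
            rcases le_total (φ k) 0 with ha | ha <;> rcases le_total (φ (k + 2)) 0 with hb | hb <;>
              simp only [ha, hb, max_eq_left, max_eq_right] <;> nlinarith
          · have h1 : t k = 0 := by simp [ht, ho]
            have h2 : t (k + 2) = 0 := by
              have : ¬ Odd (k + 2 + n) := by
                rw [add_right_comm]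
                exact fun h' => ho (by simpa [Nat.odd_add, parity_simps] using h')
              simp [ht, this]
            simp [h1, h2]
      _ = ∑ j ∈ range n, t j * (h (j + 1) - h (j - 1)) := sum_sub_add_two_smul h0 ht0
      _ ≤ _ := by
          rw [mul_sum]
          refine sum_le_sum fun j hj => ?_
          have hnn : 0 ≤ t j := by simp only [ht]; split_ifs <;> simp
          have hmul : t j * φ j = t j ^ 2 := by
            simp only [ht]
            split_ifs
            · rcases le_total (φ j) 0 with ha | ha <;>
                simp only [ha, max_eq_left, max_eq_right] <;> ring
            · simp
          calc _ ≤ t j * (μ * ω j * φ j) :=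
                mul_le_mul_of_nonneg_left (hsub j (mem_range.1 hj)) hnn
            _ = μ * (ω j * (t j * φ j)) := by ring
            _ = _ := by rw [hmul]

end Discrete

/-! ### Reduction of the Markov constant to an inequality between integrals -/

section MarkovConst

/-- The squared Gegenbauer norm of a polynomial. -/
noncomputable def normSq (lam : ℝ) (p : ℝ[X]) : ℝ :=
  ∫ x in (-1 : ℝ)..1, (p.eval x) ^ 2 * (1 - x ^ 2) ^ (lam - 1 / 2)

lemma gegNorm_eval (lam : ℝ) (p : ℝ[X]) :
    gegNorm lam (fun x => p.eval x) = √(normSq lam p) :=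
  (Real.sqrt_eq_rpow _).symm

lemma normSq_nonneg (lam : ℝ) (p : ℝ[X]) : 0 ≤ normSq lam p := by
  refine intervalIntegral.integral_nonneg (by norm_num) fun x hx => ?_
  have : 0 ≤ 1 - x ^ 2 := by nlinarith [hx.1, hx.2]
  positivity

variable {lam C c : ℝ} {n : ℕ}

lemma gegNorm_div_le (hC : 0 ≤ C) {p : ℝ[X]}
    (h : normSq lam (derivative p) ≤ C ^ 2 * normSq lam p) :
    gegNorm lam (fun x => (derivative p).eval x) / gegNorm lam (fun x => p.eval x) ≤ C := by
  rw [gegNorm_eval, gegNorm_eval]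
  refine div_le_of_le_mul₀ (Real.sqrt_nonneg _) hC ?_
  calc √(normSq lam (derivative p)) ≤ √(C ^ 2 * normSq lam p) := Real.sqrt_le_sqrt h
    _ = C * √(normSq lam p) := by rw [Real.sqrt_mul (sq_nonneg C), Real.sqrt_sq hC]

lemma markovConst_le (hC : 0 ≤ C)
    (h : ∀ p : ℝ[X], p.natDegree ≤ n → normSq lam (derivative p) ≤ C ^ 2 * normSq lam p) :
    markovConst lam n ≤ C := by
  refine Real.sSup_le ?_ hC
  rintro r ⟨p, -, hp, rfl⟩
  exact gegNorm_div_le hC (h p hp)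

lemma le_markovConst (hC : 0 ≤ C)
    (h : ∀ p : ℝ[X], p.natDegree ≤ n → normSq lam (derivative p) ≤ C ^ 2 * normSq lam p)
    (hc : 0 ≤ c) {q : ℝ[X]} (hq : q.natDegree ≤ n) (hq' : 0 < normSq lam (derivative q))
    (hcq : c ^ 2 * normSq lam q ≤ normSq lam (derivative q)) :
    c ≤ markovConst lam n := by
  have hq0 : q ≠ 0 := by
    rintro rfl
    simp [normSq] at hq'
  have hpos : 0 < normSq lam q := by
    by_contra hcon
    have := h q hq
    rw [le_antisymm (not_lt.1 hcon) (normSq_nonneg lam q)] at this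
    linarith
  refine le_trans ?_ (le_csSup ⟨C, ?_⟩ ⟨q, hq0, hq, rfl⟩)
  · rw [gegNorm_eval, gegNorm_eval, le_div_iff₀ (Real.sqrt_pos.2 hpos)]
    calc c * √(normSq lam q) = √(c ^ 2 * normSq lam q) := by
          rw [Real.sqrt_mul (sq_nonneg c), Real.sqrt_sq hc]
      _ ≤ _ := Real.sqrt_le_sqrt hcq
  · rintro r ⟨p, -, hp, rfl⟩
    exact gegNorm_div_le hC (h p hp)

end MarkovConst

/-! ### Parseval identities for Chebyshev expansions -/

section Parseval

/-- Integration of polynomials against `measureT`, as a linear functional. -/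
noncomputable def integralT : ℝ[X] →ₗ[ℝ] ℝ where
  toFun p := ∫ x, p.eval x ∂measureT
  map_add' p q := by
    simp only [eval_add]
    exact integral_add (integrable_measureT (by fun_prop)) (integrable_measureT (by fun_prop))
  map_smul' c p := by
    simp only [eval_smul, smul_eq_mul, RingHom.id_apply]
    exact integral_const_mul _ _

lemma normSq_zero_eq (p : ℝ[X]) : normSq 0 p = integralT (p ^ 2) := by
  change _ = ∫ x, (p ^ 2).eval x ∂measureT
  rw [integral_measureT, normSq]
  refine intervalIntegral.integral_congr fun x hx => ?_
  rw [Set.uIcc_of_le (by norm_num)] at hx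
  have : 0 ≤ 1 - x ^ 2 := by nlinarith [hx.1, hx.2]
  simp only [eval_pow, zero_sub]
  rw [Real.rpow_neg this, Real.sqrt_inv, Real.sqrt_eq_rpow]

lemma normSq_one_eq (p : ℝ[X]) : normSq 1 p = integralT (p ^ 2 * (1 - X ^ 2)) := by
  change _ = ∫ x, (p ^ 2 * (1 - X ^ 2)).eval x ∂measureT
  rw [integral_measureT, normSq]
  refine intervalIntegral.integral_congr fun x hx => ?_
  rw [Set.uIcc_of_le (by norm_num)] at hx
  have : 0 ≤ 1 - x ^ 2 := by nlinarith [hx.1, hx.2]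
  simp only [eval_pow, eval_mul, eval_sub, eval_one, eval_X]
  rw [show (1 : ℝ) - 1 / 2 = 1 / 2 by norm_num, ← Real.sqrt_eq_rpow, Real.sqrt_inv, mul_assoc,
    ← div_eq_mul_inv, Real.div_sqrt]

lemma integralT_T (n : ℤ) : integralT (T ℝ n) = if n = 0 then Real.pi else 0 := by
  split_ifs with h
  · subst h
    exact integral_eval_T_real_measureT_zero
  · exact integral_eval_T_real_measureT_of_ne_zero h

lemma integralT_T_mul_T (i j : ℕ) :
    integralT (T ℝ i * T ℝ j) =
      if i = j then (if i = 0 then Real.pi else Real.pi / 2) else 0 := by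
  have h : T ℝ i * T ℝ j = (1 / 2 : ℝ) • (T ℝ (i + j) + T ℝ (i - j)) := by
    rw [← T_mul_T, mul_assoc, ← C_ofNat, ← smul_eq_C_mul, smul_smul]
    norm_num
  rw [h, map_smul, map_add, integralT_T, integralT_T]
  by_cases hij : i = j
  · subst hij
    by_cases hi : i = 0
    · simp [hi]; ring
    · simp [hi, ← two_mul]; ring
  · have h1 : (i : ℤ) - j ≠ 0 := by omega
    have h2 : (i : ℤ) + j ≠ 0 := by omega
    simp [h1, h2, hij]

lemma two_mul_one_sub_X_sq_mul_U_mul_U (m n : ℤ) :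
    2 * (U ℝ m * U ℝ n * (1 - X ^ 2)) = T ℝ (m - n) - T ℝ (m + n + 2) := by
  refine Polynomial.eq_of_infinite_eval_eq _ _ ((Set.Icc_infinite (a := (-1 : ℝ)) (b := 1)
    (by norm_num)).mono fun x hx => ?_)
  obtain ⟨θ, rfl⟩ : ∃ θ, Real.cos θ = x := ⟨_, Real.cos_arccos hx.1 hx.2⟩
  have h1 := U_real_cos θ m
  have h2 := U_real_cos θ n
  simp only [Set.mem_ofPred_eq, eval_mul, eval_sub, eval_pow, eval_X, eval_one, eval_ofNat,
    T_real_cos, Int.cast_sub, Int.cast_add, Int.cast_ofNat]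
  rw [← Real.sin_sq,
    show ((m : ℝ) - n) * θ = (m + 1) * θ - (n + 1) * θ by ring,
    show ((m : ℝ) + n + 2) * θ = (m + 1) * θ + (n + 1) * θ by ring,
    Real.cos_sub, Real.cos_add, ← h1, ← h2]
  ring

lemma integralT_U_mul_U (i j : ℕ) :
    integralT (U ℝ i * U ℝ j * (1 - X ^ 2)) = if i = j then Real.pi / 2 else 0 := by
  have h : U ℝ i * U ℝ j * (1 - X ^ 2) = (1 / 2 : ℝ) • (T ℝ (i - j) - T ℝ (i + j + 2)) := by
    rw [← two_mul_one_sub_X_sq_mul_U_mul_U, ← C_ofNat, ← smul_eq_C_mul, smul_smul]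
    norm_num
  have h2 : (i : ℤ) + j + 2 ≠ 0 := by omega
  rw [h, map_smul, map_sub, integralT_T, integralT_T, if_neg h2]
  by_cases hij : i = j
  · simp [hij]; ring
  · have h1 : (i : ℤ) - j ≠ 0 := by omega
    simp [h1, hij]

lemma integralT_sum_sq {S : ℕ → ℝ[X]} {W : ℝ[X]} {g : ℕ → ℝ}
    (hS : ∀ i j, integralT (S i * S j * W) = if i = j then g i else 0) (s : Finset ℕ)
    (c : ℕ → ℝ) :
    integralT ((∑ i ∈ s, c i • S i) ^ 2 * W) = ∑ i ∈ s, g i * c i ^ 2 := by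
  rw [sq, sum_mul_sum, sum_mul, map_sum]
  refine sum_congr rfl fun i hi => ?_
  rw [sum_mul, map_sum]
  have : ∀ j, integralT (c i • S i * c j • S j * W) = if i = j then g i * c i ^ 2 else 0 := by
    intro j
    rw [smul_mul_smul_comm, smul_mul_assoc, map_smul, hS]
    split_ifs with h
    · subst h; simp only [smul_eq_mul]; ring
    · simp
  simp only [this]
  simp [hi]

lemma normSq_zero_sum_T (s : Finset ℕ) (c : ℕ → ℝ) :
    normSq 0 (∑ i ∈ s, c i • T ℝ i) =
      ∑ i ∈ s, (if i = 0 then Real.pi else Real.pi / 2) * c i ^ 2 := by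
  rw [normSq_zero_eq, ← mul_one (_ ^ 2)]
  exact integralT_sum_sq (fun i j => by rw [mul_one, integralT_T_mul_T]) s c

lemma normSq_one_sum_U (s : Finset ℕ) (c : ℕ → ℝ) :
    normSq 1 (∑ i ∈ s, c i • U ℝ i) = ∑ i ∈ s, Real.pi / 2 * c i ^ 2 := by
  rw [normSq_one_eq]
  exact integralT_sum_sq integralT_U_mul_U s c

lemma exists_eq_sum_of_degree_lt (S : Sequence ℝ) {n : ℕ} {p : ℝ[X]} (hp : p.degree < n) :
    ∃ c : ℕ → ℝ, p = ∑ i ∈ range n, c i • S i := by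
  have hmem : p ∈ degreeLT ℝ n := mem_degreeLT.2 hp
  rw [← S.span_degreeLT (fun i _ => (leadingCoeff_ne_zero.2 (S.ne_zero i)).isUnit),
    ← Finset.coe_range, Submodule.mem_span_image_finset_iff_exists_fun'] at hmem
  obtain ⟨c, hc⟩ := hmem
  exact ⟨c, hc.symm⟩

lemma degree_derivative_lt_of_natDegree_le {n : ℕ} {p : ℝ[X]} (hp : p.natDegree ≤ n) :
    (derivative p).degree < n := by
  by_cases h0 : derivative p = 0
  · simp [h0, bot_lt_iff_ne_bot]
  · have hp0 : p.natDegree ≠ 0 := fun h => h0 (derivative_of_natDegree_zero h)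
    rw [degree_eq_natDegree h0, Nat.cast_lt]
    exact (natDegree_derivative_lt hp0).trans_le hp

end Parseval

/-! ### The Markov problem as a discrete Hardy inequality -/

section Model

/-- The Markov problem for degree `n` and weight `w_lam` is equivalent to comparing
`∑ ω j * t j ^ 2` with `∑ α k * (t k - t (k + 2)) ^ 2` for sequences `t` supported below `n`. -/
structure MarkovModel (lam : ℝ) (n : ℕ) (α ω : ℕ → ℝ) : Prop where
  exists_seq : ∀ p : ℝ[X], p.natDegree ≤ n → ∃ t : ℕ → ℝ, (∀ j, n ≤ j → t j = 0) ∧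
    normSq lam (derivative p) = Real.pi / 2 * ∑ j ∈ range n, ω j * t j ^ 2 ∧
    Real.pi / 2 * ∑ k ∈ range n, α k * (t k - t (k + 2)) ^ 2 ≤ normSq lam p
  exists_poly : ∀ t : ℕ → ℝ, (∀ j, n ≤ j → t j = 0) → ∃ p : ℝ[X], p.natDegree ≤ n ∧
    normSq lam (derivative p) = Real.pi / 2 * ∑ j ∈ range n, ω j * t j ^ 2 ∧
    normSq lam p = Real.pi / 2 * ∑ k ∈ range n, α k * (t k - t (k + 2)) ^ 2

lemma markovModel_of_sequence {lam : ℝ} {n : ℕ} {α ω β γ δ : ℕ → ℝ} (S : Sequence ℝ)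
    (hS0 : S 0 = 1) (hγ : 0 ≤ γ 0) (hδ : ∀ j, δ j ≠ 0)
    (hnorm : ∀ (s : Finset ℕ) (c : ℕ → ℝ),
      normSq lam (∑ i ∈ s, c i • S i) = ∑ i ∈ s, γ i * c i ^ 2)
    (hα : ∀ k, γ (k + 1) * β k ^ 2 = Real.pi / 2 * α k)
    (hω : ∀ j, γ j * δ j ^ 2 = Real.pi / 2 * ω j)
    (hderiv : ∀ t : ℕ → ℝ, (∀ j, n ≤ j → t j = 0) →
      derivative (∑ k ∈ range n, (β k * (t k - t (k + 2))) • S (k + 1)) =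
        ∑ j ∈ range n, (δ j * t j) • S j) :
    MarkovModel lam n α ω := by
  have norm_deriv : ∀ t : ℕ → ℝ, normSq lam (∑ j ∈ range n, (δ j * t j) • S j) =
      Real.pi / 2 * ∑ j ∈ range n, ω j * t j ^ 2 := by
    intro t
    rw [hnorm, mul_sum]
    refine sum_congr rfl fun j _ => ?_
    rw [mul_pow, ← mul_assoc, hω, mul_assoc]
  have norm_add : ∀ (t : ℕ → ℝ) (a : ℝ),
      normSq lam (∑ k ∈ range n, (β k * (t k - t (k + 2))) • S (k + 1) + C a) =
      Real.pi / 2 * ∑ k ∈ range n, α k * (t k - t (k + 2)) ^ 2 + γ 0 * a ^ 2 := by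
    intro t a
    have h := hnorm (range (n + 1))
      (fun i => Nat.casesOn i a fun k => β k * (t k - t (k + 2)))
    simp only [sum_range_succ', hS0, ← Algebra.algebraMap_eq_smul_one] at h
    rw [← algebraMap_eq, mul_sum]
    refine h.trans ?_
    congr 1
    refine sum_congr rfl fun k _ => ?_
    rw [mul_pow, ← mul_assoc, hα, mul_assoc]
  refine ⟨fun p hp => ?_, fun t ht => ?_⟩
  · obtain ⟨c, hc⟩ := exists_eq_sum_of_degree_lt S (degree_derivative_lt_of_natDegree_le hp)
    set t : ℕ → ℝ := fun j => if j < n then c j / δ j else 0 with ht_def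
    have ht : ∀ j, n ≤ j → t j = 0 := fun j hj => by simp [ht_def, not_lt.2 hj]
    have hp' : derivative p = ∑ j ∈ range n, (δ j * t j) • S j := by
      rw [hc]
      refine sum_congr rfl fun j hj => ?_
      have := hδ j
      rw [ht_def]
      simp only [mem_range.1 hj, if_true]
      rw [mul_div_cancel₀ _ this]
    obtain ⟨a, ha⟩ : ∃ a, p = ∑ k ∈ range n, (β k * (t k - t (k + 2))) • S (k + 1) + C a := by
      have h0 : derivative (p - ∑ k ∈ range n, (β k * (t k - t (k + 2))) • S (k + 1)) = 0 := by
        rw [derivative_sub, hderiv t ht, hp', sub_self]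
      refine ⟨_, (sub_eq_iff_eq_add'.1
        (eq_C_of_natDegree_eq_zero (derivative_eq_zero.1 h0)))⟩
    refine ⟨t, ht, by rw [hp', norm_deriv], ?_⟩
    rw [ha, norm_add]
    have := mul_nonneg hγ (sq_nonneg a)
    linarith
  · refine ⟨∑ k ∈ range n, (β k * (t k - t (k + 2))) • S (k + 1), ?_, ?_, ?_⟩
    · refine natDegree_sum_le_of_forall_le _ _ fun k hk => ?_
      refine (natDegree_smul_le _ _).trans ?_
      rw [S.natDegree_eq]
      exact mem_range.1 hk
    · rw [hderiv t ht, norm_deriv]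
    · simpa using norm_add t 0

lemma MarkovModel.normSq_derivative_le {lam : ℝ} {n : ℕ} {α ω : ℕ → ℝ}
    (M : MarkovModel lam n α ω) {C : ℝ} (hC : 0 < C)
    (h : ∀ t : ℕ → ℝ, (∀ j, n ≤ j → t j = 0) → 1 / C ^ 2 * ∑ j ∈ range n, ω j * t j ^ 2 ≤
      ∑ k ∈ range n, α k * (t k - t (k + 2)) ^ 2) (p : ℝ[X]) (hp : p.natDegree ≤ n) :
    normSq lam (derivative p) ≤ C ^ 2 * normSq lam p := by
  obtain ⟨t, ht, h1, h2⟩ := M.exists_seq p hp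
  have h3 := h t ht
  rw [div_mul_eq_mul_div, one_mul, div_le_iff₀ (by positivity)] at h3
  have h4 := mul_le_mul_of_nonneg_left h3 (by positivity : 0 ≤ Real.pi / 2)
  have h5 := mul_le_mul_of_nonneg_left h2 (sq_nonneg C)
  rw [h1]
  linarith

lemma MarkovModel.le_markovConst {lam : ℝ} {n : ℕ} {α ω : ℕ → ℝ} (M : MarkovModel lam n α ω)
    {C : ℝ} (hC : 0 ≤ C)
    (hle : ∀ p : ℝ[X], p.natDegree ≤ n → normSq lam (derivative p) ≤ C ^ 2 * normSq lam p)
    {c : ℝ} (hc : 0 < c)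
    (h : ∃ t : ℕ → ℝ, (∀ j, n ≤ j → t j = 0) ∧ 0 < ∑ j ∈ range n, ω j * t j ^ 2 ∧
      ∑ k ∈ range n, α k * (t k - t (k + 2)) ^ 2 ≤ 1 / c ^ 2 * ∑ j ∈ range n, ω j * t j ^ 2) :
    c ≤ markovConst lam n := by
  obtain ⟨t, ht, hpos, ht'⟩ := h
  obtain ⟨p, hp, h1, h2⟩ := M.exists_poly t ht
  refine MarkovChebyshev.le_markovConst hC hle hc.le hp ?_ ?_
  · rw [h1]
    positivity
  · rw [h1, h2]
    rw [div_mul_eq_mul_div, one_mul, le_div_iff₀ (by positivity)] at ht'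
    have h4 := mul_le_mul_of_nonneg_left ht' (by positivity : 0 ≤ Real.pi / 2)
    linarith

lemma markovModel_zero (n : ℕ) :
    MarkovModel 0 n (fun k => 1 / (4 * ((k : ℝ) + 1) ^ 2))
      (fun j => if j = 0 then 1 / 2 else 1) := by
  refine markovModel_of_sequence (β := fun k => 1 / (2 * ((k : ℝ) + 1)))
    (γ := fun i => if i = 0 then Real.pi else Real.pi / 2)
    (δ := fun j => if j = 0 then 1 / 2 else 1)
    ⟨fun i => T ℝ i, fun i => by simp⟩ (by simp) (by simp [Real.pi_nonneg])
    (fun j => by split_ifs <;> norm_num) normSq_zero_sum_T (fun k => ?_) (fun j => ?_)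
    (fun t ht => ?_)
  · simp only [Nat.add_eq_zero_iff, one_ne_zero, and_false, if_false]
    field_simp
    norm_num
  · split_ifs <;> ring
  · have key := sum_sub_add_two_smul (n := n) (h := fun i : ℕ => U ℝ ((i : ℤ) - 1))
      (by simp) ht
    rw [derivative_sum]
    have h1 : ∀ k ∈ range n, derivative ((1 / (2 * ((k : ℝ) + 1)) * (t k - t (k + 2))) •
        T ℝ ((k + 1 : ℕ) : ℤ)) = (1 / 2 : ℝ) • (t k - t (k + 2)) • U ℝ (((k + 1 : ℕ) : ℤ) - 1) := by
      intro k _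
      have hk : ((k : ℝ) + 1) ≠ 0 := by positivity
      rw [derivative_smul, T_derivative_eq_U, Int.cast_natCast, ← C_eq_natCast, ← smul_eq_C_mul,
        smul_smul, smul_smul]
      congr 1
      push_cast
      field_simp
    rw [sum_congr rfl h1, ← smul_sum, key, smul_sum]
    refine sum_congr rfl fun j _ => ?_
    rcases j with _ | j
    · simp [smul_smul, mul_comm]
    · have := two_mul_T_eq_U_sub_U ℝ ((j : ℤ) - 1)
      rw [show (j : ℤ) - 1 + 2 = j + 1 by ring] at this
      simp only [Nat.add_eq_zero_iff, one_ne_zero, and_false, if_false, one_mul,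
        Nat.add_sub_cancel, Nat.cast_add, Nat.cast_one, add_sub_cancel_right]
      rw [← this, ← C_ofNat, ← smul_eq_C_mul, smul_smul, smul_smul]
      congr 1
      ring

lemma markovModel_one (n : ℕ) :
    MarkovModel 1 n (fun _ => 1) (fun j => 4 * ((j : ℝ) + 1) ^ 2) := by
  refine markovModel_of_sequence (β := fun _ => 1) (γ := fun _ => Real.pi / 2)
    (δ := fun j => 2 * ((j : ℝ) + 1))
    ⟨fun i => U ℝ i, fun i => by simp [degree_U_natCast]⟩ (by simp) (by positivity)
    (fun j => by positivity) normSq_one_sum_U (fun k => by ring) (fun j => by ring)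
    (fun t ht => ?_)
  have key := sum_sub_add_two_smul (n := n) (h := fun i : ℕ => derivative (U ℝ i)) (by simp) ht
  simp only [derivative_sum, derivative_smul, one_mul]
  rw [key]
  refine sum_congr rfl fun j _ => ?_
  have h2 : derivative (2 * T ℝ ((j : ℤ) + 1)) = (2 * ((j : ℝ) + 1)) • U ℝ j := by
    rw [← C_ofNat, ← smul_eq_C_mul, derivative_smul, T_derivative_eq_U, add_sub_cancel_right,
      mul_smul, smul_eq_C_mul ((j : ℝ) + 1)]
    simp
  rw [mul_comm, mul_smul, ← h2]
  congr 1
  rcases j with _ | j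
  · simp
  · have := two_mul_T_eq_U_sub_U ℝ (j : ℤ)
    simp only [Nat.add_sub_cancel, Nat.cast_add, Nat.cast_one, add_assoc, one_add_one_eq_two,
      Nat.cast_ofNat]
    rw [this, derivative_sub]

end Model

/-! ### Polynomial solutions of the discrete problems

With `μ = 1 / c ^ 2`, the polynomials `1 - μ * sol1 + μ ^ 2 * sol2 - ...` are partial sums of
series solving the discrete Euler–Lagrange equations. Truncating after an odd (even) number of
terms gives a supersolution (subsolution). -/

section Polynomials

/-- Iterated discrete antiderivative number 1 of `1` for the weight `w_0`. -/
noncomputable def solT1 (x : ℝ) : ℝ :=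
  1 / 4 * x ^ 4 - 1 / 2 * x ^ 2 + 1 / 4

/-- The flux `(solT1 (x + 1) - solT1 (x - 1)) / (4 * x ^ 2)`, as a polynomial. -/
noncomputable def fluxT1 (x : ℝ) : ℝ :=
  1 / 2 * x

/-- Iterated discrete antiderivative number 2 of `1` for the weight `w_0`. -/
noncomputable def solT2 (x : ℝ) : ℝ :=
  1 / 160 * x ^ 8 - 41 / 360 * x ^ 6 + 443 / 720 * x ^ 4 - 329 / 360 * x ^ 2 + 13 / 32

/-- The flux `(solT2 (x + 1) - solT2 (x - 1)) / (4 * x ^ 2)`, as a polynomial. -/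
noncomputable def fluxT2 (x : ℝ) : ℝ :=
  1 / 40 * x ^ 5 - 1 / 6 * x ^ 3 + 4 / 15 * x

/-- Iterated discrete antiderivative number 3 of `1` for the weight `w_0`. -/
noncomputable def solT3 (x : ℝ) : ℝ :=
  1 / 17280 * x ^ 12 - 1129 / 302400 * x ^ 10 + 3427 / 40320 * x ^ 8 - 17753 / 21600 * x ^ 6
    + 403177 / 120960 * x ^ 4 - 455843 / 100800 * x ^ 2 + 247 / 128

/-- The flux `(solT3 (x + 1) - solT3 (x - 1)) / (4 * x ^ 2)`, as a polynomial. -/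
noncomputable def fluxT3 (x : ℝ) : ℝ :=
  1 / 2880 * x ^ 9 - 31 / 2520 * x ^ 7 + 5 / 36 * x ^ 5 - 8 / 15 * x ^ 3 + 64 / 105 * x

/-- Iterated discrete antiderivative number 4 of `1` for the weight `w_0`. -/
noncomputable def solT4 (x : ℝ) : ℝ :=
  1 / 3594240 * x ^ 16 - 1957 / 44844800 * x ^ 14 + 635099 / 239500800 * x ^ 12
    - 34553 / 435456 * x ^ 10 + 125637361 / 101606400 * x ^ 8 - 106421297 / 10886400 * x ^ 6
    + 110916103007 / 3113510400 * x ^ 4 - 56286069703 / 1210809600 * x ^ 2 + 39891 / 2048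

/-- The flux `(solT4 (x + 1) - solT4 (x - 1)) / (4 * x ^ 2)`, as a polynomial. -/
noncomputable def fluxT4 (x : ℝ) : ℝ :=
  1 / 449280 * x ^ 13 - 757 / 3326400 * x ^ 11 + 389 / 45360 * x ^ 9 - 103 / 700 * x ^ 7
    + 122 / 105 * x ^ 5 - 52384 / 14175 * x ^ 3 + 32768 / 9009 * x

/-- Iterated discrete antiderivative number 1 of `1` for the weight `w_1`. -/
noncomputable def solU1 (x : ℝ) : ℝ :=
  1 / 12 * x ^ 4 - 1 / 3 * x ^ 2 + 1 / 4

/-- Iterated discrete antiderivative number 2 of `1` for the weight `w_1`. -/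
noncomputable def solU2 (x : ℝ) : ℝ :=
  1 / 672 * x ^ 8 - 7 / 180 * x ^ 6 + 43 / 144 * x ^ 4 - 841 / 1260 * x ^ 2 + 13 / 32

/-- Iterated discrete antiderivative number 3 of `1` for the weight `w_1`. -/
noncomputable def solU3 (x : ℝ) : ℝ :=
  1 / 88704 * x ^ 12 - 421 / 453600 * x ^ 10 + 3293 / 120960 * x ^ 8 - 26183 / 75600 * x ^ 6
    + 681581 / 362880 * x ^ 4 - 1933699 / 554400 * x ^ 2 + 247 / 128

/-- Iterated discrete antiderivative number 4 of `1` for the weight `w_1`. -/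
noncomputable def solU4 (x : ℝ) : ℝ :=
  1 / 21288960 * x ^ 16 - 16087 / 1816214400 * x ^ 14 + 156251 / 239500800 * x ^ 12
    - 130399 / 5443200 * x ^ 10 + 47259089 / 101606400 * x ^ 8 - 279297929 / 59875200 * x ^ 6
    + 748411373 / 34214400 * x ^ 4 - 22478274089 / 605404800 * x ^ 2 + 39891 / 2048

lemma solT3_nonneg (j : ℕ) : 0 ≤ solT3 j := by
  by_cases hj : j < 5
  · interval_cases j <;> norm_num [solT3]
  · obtain ⟨i, rfl⟩ := Nat.exists_eq_add_of_le (not_lt.1 hj)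
    simp only [solT3]
    push_cast
    ring_nf
    positivity

lemma solT4_nonneg (j : ℕ) : 0 ≤ solT4 j := by
  by_cases hj : j < 7
  · interval_cases j <;> norm_num [solT4]
  · obtain ⟨i, rfl⟩ := Nat.exists_eq_add_of_le (not_lt.1 hj)
    simp only [solT4]
    push_cast
    ring_nf
    positivity

lemma solU3_nonneg (j : ℕ) : 0 ≤ solU3 j := by
  by_cases hj : j < 6
  · interval_cases j <;> norm_num [solU3]
  · obtain ⟨i, rfl⟩ := Nat.exists_eq_add_of_le (not_lt.1 hj)
    simp only [solU3]
    push_cast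
    ring_nf
    positivity

lemma solU4_nonneg (j : ℕ) : 0 ≤ solU4 j := by
  by_cases hj : j < 8
  · interval_cases j <;> norm_num [solU4]
  · obtain ⟨i, rfl⟩ := Nat.exists_eq_add_of_le (not_lt.1 hj)
    simp only [solU4]
    push_cast
    ring_nf
    positivity

/-- Supersolution for the weight `w_0`. -/
noncomputable def superT (μ x : ℝ) : ℝ := 1 - μ * solT1 x + μ ^ 2 * solT2 x - μ ^ 3 * solT3 x

/-- Flux of `superT`. -/
noncomputable def superFluxT (μ x : ℝ) : ℝ := μ * fluxT1 x - μ ^ 2 * fluxT2 x + μ ^ 3 * fluxT3 x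

/-- Subsolution for the weight `w_0`. -/
noncomputable def subT (μ x : ℝ) : ℝ := superT μ x + μ ^ 4 * solT4 x

/-- Flux of `subT`. -/
noncomputable def subFluxT (μ x : ℝ) : ℝ := superFluxT μ x - μ ^ 4 * fluxT4 x

/-- Supersolution for the weight `w_1`. -/
noncomputable def superU (μ x : ℝ) : ℝ := 1 - μ * solU1 x + μ ^ 2 * solU2 x - μ ^ 3 * solU3 x

/-- Subsolution for the weight `w_1`. -/
noncomputable def subU (μ x : ℝ) : ℝ := superU μ x + μ ^ 4 * solU4 x

lemma superT_sub_superT (μ x : ℝ) :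
    superT μ (x - 1) - superT μ (x + 1) = 4 * x ^ 2 * superFluxT μ x := by
  simp only [superT, superFluxT, solT1, solT2, solT3, fluxT1, fluxT2, fluxT3]
  ring

lemma superFluxT_sub_superFluxT (μ x : ℝ) :
    superFluxT μ (x + 1) - superFluxT μ (x - 1) = μ * (superT μ x + μ ^ 3 * solT3 x) := by
  simp only [superT, superFluxT, solT1, solT2, solT3, fluxT1, fluxT2, fluxT3]
  ring

lemma superFluxT_one (μ : ℝ) :
    superFluxT μ 1 = μ * (1 / 2) * (superT μ 0 + μ ^ 3 * solT3 0) := by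
  simp only [superT, superFluxT, solT1, solT2, solT3, fluxT1, fluxT2, fluxT3]
  ring

lemma superFluxT_zero (μ : ℝ) : superFluxT μ 0 = 0 := by
  simp [superFluxT, fluxT1, fluxT2, fluxT3]

lemma subT_sub_subT (μ x : ℝ) :
    subT μ (x - 1) - subT μ (x + 1) = 4 * x ^ 2 * subFluxT μ x := by
  have h : solT4 (x + 1) - solT4 (x - 1) = 4 * x ^ 2 * fluxT4 x := by
    simp only [solT4, fluxT4]
    ring
  simp only [subT, subFluxT]
  linear_combination superT_sub_superT μ x - μ ^ 4 * h

lemma subFluxT_sub_subFluxT (μ x : ℝ) :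
    subFluxT μ (x + 1) - subFluxT μ (x - 1) = μ * (subT μ x - μ ^ 4 * solT4 x) := by
  have h : fluxT4 (x + 1) - fluxT4 (x - 1) = solT3 x := by
    simp only [solT3, fluxT4]
    ring
  simp only [subT, subFluxT]
  linear_combination superFluxT_sub_superFluxT μ x - μ ^ 4 * h

lemma subFluxT_one (μ : ℝ) :
    subFluxT μ 1 = μ * (1 / 2) * (subT μ 0 - μ ^ 4 * solT4 0) := by
  have h : fluxT4 1 = solT3 0 / 2 := by norm_num [solT3, fluxT4]
  simp only [subT, subFluxT]
  linear_combination superFluxT_one μ - μ ^ 4 * h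

lemma subFluxT_zero (μ : ℝ) : subFluxT μ 0 = 0 := by
  simp [subFluxT, superFluxT_zero, fluxT4]

lemma superU_second_difference (μ x : ℝ) :
    2 * superU μ x - superU μ (x + 2) - superU μ (x - 2) =
      μ * (4 * x ^ 2) * (superU μ x + μ ^ 3 * solU3 x) := by
  simp only [superU, solU1, solU2, solU3]
  ring

lemma subU_second_difference (μ x : ℝ) :
    2 * subU μ x - subU μ (x + 2) - subU μ (x - 2) =
      μ * (4 * x ^ 2) * (subU μ x - μ ^ 4 * solU4 x) := by
  have h : solU4 (x + 2) + solU4 (x - 2) - 2 * solU4 x = 4 * x ^ 2 * solU3 x := by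
    simp only [solU3, solU4]
    ring
  simp only [subU]
  linear_combination superU_second_difference μ x - μ ^ 4 * h

lemma superU_neg (μ x : ℝ) : superU μ (-x) = superU μ x := by
  simp only [superU, solU1, solU2, solU3]
  ring

lemma subU_neg (μ x : ℝ) : subU μ (-x) = subU μ x := by
  have h : solU4 (-x) = solU4 x := by
    simp only [solU4]
    ring
  rw [subU, subU, superU_neg, h]

lemma superU_two (μ : ℝ) : superU μ 2 = superU μ 0 := by
  norm_num [superU, solU1, solU2, solU3]

lemma subU_two (μ : ℝ) : subU μ 2 = subU μ 0 := by
  rw [subU, subU, superU_two]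
  norm_num [solU4]

lemma superT_pos {n j : ℕ} (hn : 1 ≤ n) (hj : j ≤ n + 1) :
    0 < superT (1 / (0.472871 * ((n : ℝ) + 2) ^ 2) ^ 2) j := by
  set y : ℝ := (0.472871 * ((n : ℝ) + 2) ^ 2) ^ 2 with hy
  have hypos : 0 < y := by positivity
  have hnum : 0 < y ^ 3 - y ^ 2 * solT1 j + y * solT2 j - solT3 j := by
    rcases j with _ | i
    · obtain ⟨d, rfl⟩ := Nat.exists_eq_add_of_le hn
      simp only [hy, solT1, solT2, solT3]
      push_cast
      ring_nf
      positivity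
    · obtain ⟨d, rfl⟩ := Nat.exists_eq_add_of_le (Nat.le_of_succ_le_succ hj)
      simp only [hy, solT1, solT2, solT3]
      push_cast
      ring_nf
      positivity
  have : superT (1 / y) j = (y ^ 3 - y ^ 2 * solT1 j + y * solT2 j - solT3 j) / y ^ 3 := by
    simp only [superT]
    field_simp
  rw [this]
  positivity

lemma superU_pos {n j : ℕ} (hj : j ≤ n + 1) :
    0 < superU (1 / (0.250987 * ((n : ℝ) + 4) ^ 2) ^ 2) ((j : ℝ) + 1) := by
  set y : ℝ := (0.250987 * ((n : ℝ) + 4) ^ 2) ^ 2 with hy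
  have hypos : 0 < y := by positivity
  have hnum : 0 < y ^ 3 - y ^ 2 * solU1 (j + 1) + y * solU2 (j + 1) - solU3 (j + 1) := by
    obtain ⟨d, hd⟩ := Nat.exists_eq_add_of_le hj
    have hn : (n : ℝ) = j + d - 1 := by
      have : ((n + 1 : ℕ) : ℝ) = (j + d : ℕ) := by rw [hd]
      push_cast at this
      linarith
    simp only [hy, hn, solU1, solU2, solU3]
    ring_nf
    positivity
  have : superU (1 / y) (j + 1) =
      (y ^ 3 - y ^ 2 * solU1 (j + 1) + y * solU2 (j + 1) - solU3 (j + 1)) / y ^ 3 := by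
    simp only [superU]
    field_simp
  rw [this]
  positivity

lemma subT_nonpos {n : ℕ} (hn : 2 ≤ n) :
    subT (1 / (0.472135 * (n : ℝ) ^ 2) ^ 2) ((n : ℝ) + 1) ≤ 0 := by
  have hn0 : (0 : ℝ) < n := by positivity
  set y : ℝ := (0.472135 * (n : ℝ) ^ 2) ^ 2 with hy
  have hypos : 0 < y := by positivity
  have hnum : 0 ≤ -(y ^ 4 - y ^ 3 * solT1 (n + 1) + y ^ 2 * solT2 (n + 1) - y * solT3 (n + 1)
      + solT4 (n + 1)) := by
    obtain ⟨d, rfl⟩ := Nat.exists_eq_add_of_le hn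
    simp only [hy, solT1, solT2, solT3, solT4]
    push_cast
    ring_nf
    positivity
  have : subT (1 / y) (n + 1) = -(-(y ^ 4 - y ^ 3 * solT1 (n + 1) + y ^ 2 * solT2 (n + 1) -
      y * solT3 (n + 1) + solT4 (n + 1)) / y ^ 4) := by
    simp only [subT, superT]
    field_simp
  rw [this]
  exact neg_nonpos.2 (div_nonneg hnum (by positivity))

lemma subU_nonpos {n : ℕ} (hn : 3 ≤ n) :
    subU (1 / (0.248549 * (n : ℝ) ^ 2) ^ 2) ((n : ℝ) + 2) ≤ 0 := by
  have hn0 : (0 : ℝ) < n := by positivity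
  set y : ℝ := (0.248549 * (n : ℝ) ^ 2) ^ 2 with hy
  have hypos : 0 < y := by positivity
  have hnum : 0 ≤ -(y ^ 4 - y ^ 3 * solU1 (n + 2) + y ^ 2 * solU2 (n + 2) - y * solU3 (n + 2)
      + solU4 (n + 2)) := by
    obtain ⟨d, rfl⟩ := Nat.exists_eq_add_of_le hn
    simp only [hy, solU1, solU2, solU3, solU4]
    push_cast
    ring_nf
    positivity
  have : subU (1 / y) (n + 2) = -(-(y ^ 4 - y ^ 3 * solU1 (n + 2) + y ^ 2 * solU2 (n + 2) -
      y * solU3 (n + 2) + solU4 (n + 2)) / y ^ 4) := by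
    simp only [subU, superU]
    field_simp
  rw [this]
  exact neg_nonpos.2 (div_nonneg hnum (by positivity))

lemma one_div_sq_le {a m x : ℝ} (ha : 0 < a) (hm : 0 < m) (h : m ≤ x) :
    1 / (a * x ^ 2) ^ 2 ≤ 1 / (a * m ^ 2) ^ 2 := by
  gcongr

lemma subT_zero_pos {μ : ℝ} (h0 : 0 ≤ μ) (h : μ ≤ 1 / 3) : 0 < subT μ 0 := by
  have h2 : μ ^ 2 ≤ 1 / 9 := by nlinarith
  norm_num [subT, superT, solT1, solT2, solT3, solT4]
  nlinarith [mul_le_mul_of_nonneg_left h2 h0, sq_nonneg μ, sq_nonneg (μ ^ 2)]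

lemma subT_one (μ : ℝ) : subT μ 1 = 1 := by
  norm_num [subT, superT, solT1, solT2, solT3, solT4]

lemma subU_one (μ : ℝ) : subU μ 1 = 1 := by
  norm_num [subU, superU, solU1, solU2, solU3, solU4]

lemma subU_two_pos {μ : ℝ} (h0 : 0 ≤ μ) (h : μ ≤ 1 / 3) : 0 < subU μ 2 := by
  have h2 : μ ^ 2 ≤ 1 / 9 := by nlinarith
  norm_num [subU, superU, solU1, solU2, solU3, solU4]
  nlinarith [mul_le_mul_of_nonneg_left h2 h0, sq_nonneg μ, sq_nonneg (μ ^ 2)]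

end Polynomials

/-! ### The four bounds -/

section Bounds

variable {n : ℕ}

lemma normSq_zero_derivative_le (hn : 1 ≤ n) (p : ℝ[X]) (hp : p.natDegree ≤ n) :
    normSq 0 (derivative p) ≤ (0.472871 * ((n : ℝ) + 2) ^ 2) ^ 2 * normSq 0 p := by
  refine (markovModel_zero n).normSq_derivative_le (by positivity) (fun t ht => ?_) p hp
  set μ : ℝ := 1 / (0.472871 * ((n : ℝ) + 2) ^ 2) ^ 2 with hμ
  have hμ0 : 0 < μ := by positivity
  refine mul_sum_le_of_supersolution (φ := fun j => superT μ j) (h := fun i => superFluxT μ i)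
    (by simp [superFluxT_zero]) (fun k => ?_) (fun k => by positivity)
    (fun j hj => superT_pos hn (by omega)) (superT_pos hn (by omega)).le
    (superT_pos hn le_rfl).le (fun j _ => ?_) ht
  · have := superT_sub_superT μ ((k : ℝ) + 1)
    rw [add_sub_cancel_right, add_assoc, one_add_one_eq_two] at this
    push_cast
    rw [this]
    field_simp
  · have hs : 0 ≤ μ ^ 3 * solT3 j := mul_nonneg (by positivity) (solT3_nonneg j)
    rcases j with _ | j
    · have := superFluxT_one μ
      push_cast at hs ⊢
      simp only [superFluxT_zero, sub_zero, this]
      gcongr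
      linarith
    · have := superFluxT_sub_superFluxT μ ((j + 1 : ℕ) : ℝ)
      simp only [Nat.add_eq_zero_iff, one_ne_zero, and_false, if_false, Nat.add_sub_cancel,
        mul_one]
      push_cast at this hs ⊢
      rw [add_sub_cancel_right] at this
      rw [this]
      gcongr
      linarith

lemma normSq_one_derivative_le (p : ℝ[X]) (hp : p.natDegree ≤ n) :
    normSq 1 (derivative p) ≤ (0.250987 * ((n : ℝ) + 4) ^ 2) ^ 2 * normSq 1 p := by
  refine (markovModel_one n).normSq_derivative_le (by positivity) (fun t ht => ?_) p hp
  set μ : ℝ := 1 / (0.250987 * ((n : ℝ) + 4) ^ 2) ^ 2 with hμ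
  have hμ0 : 0 < μ := by positivity
  refine mul_sum_le_of_supersolution (φ := fun j => superU μ ((j : ℝ) + 1))
    (h := fun i => superU μ i - superU μ ((i : ℝ) + 2))
    (by simp [superU_two]) (fun k => ?_) (fun k => by positivity)
    (fun j hj => superU_pos (by omega)) (superU_pos (by omega)).le
    (superU_pos le_rfl).le (fun j _ => ?_) ht
  · push_cast
    rw [one_mul, add_right_comm]
  · have hs : 0 ≤ μ ^ 3 * solU3 ((j + 1 : ℕ) : ℝ) :=
      mul_nonneg (by positivity) (solU3_nonneg (j + 1))
    have key := superU_second_difference μ ((j : ℝ) + 1)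
    have hle : μ * (4 * ((j : ℝ) + 1) ^ 2) * superU μ (j + 1) ≤
        2 * superU μ ((j : ℝ) + 1) - superU μ (j + 1 + 2) - superU μ (j + 1 - 2) := by
      rw [key]
      push_cast at hs
      gcongr
      linarith
    refine hle.trans (le_of_eq ?_)
    rcases j with _ | j
    · have := superU_neg μ 1
      norm_num [superU_two] at this ⊢
      rw [this]
      ring
    · simp only [Nat.add_sub_cancel]
      push_cast
      rw [show (j : ℝ) + 1 + 1 - 2 = j by ring, show (j : ℝ) + 1 + 1 = j + 2 by ring]
      ring

lemma le_markovConst_zero (hn : 1 ≤ n) : 0.472135 * (n : ℝ) ^ 2 ≤ markovConst 0 n := by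
  have hn0 : (0 : ℝ) < n := by positivity
  refine (markovModel_zero n).le_markovConst (by positivity) (normSq_zero_derivative_le hn)
    (by positivity) ?_
  obtain rfl | hn2 : n = 1 ∨ 2 ≤ n := by omega
  · refine ⟨fun j => if j = 0 then 1 else 0, fun j hj => if_neg (by omega), ?_, ?_⟩ <;> norm_num
  set μ : ℝ := 1 / (0.472135 * (n : ℝ) ^ 2) ^ 2 with hμ
  have hμ0 : 0 < μ := by positivity
  have hμ1 : μ ≤ 1 / 3 :=
    (one_div_sq_le (by norm_num) two_pos (by exact_mod_cast hn2)).trans (by norm_num)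
  have hend : subT μ ((n : ℝ) + 1) ≤ 0 := subT_nonpos hn2
  refine exists_sum_le_of_subsolution (φ := fun j => subT μ j) (h := fun i => subFluxT μ i)
    hn (by simp [subFluxT_zero]) (fun k => ?_) (fun k => by positivity)
    (by simpa using subT_zero_pos hμ0.le hμ1) (by simp [subT_one])
    (by simpa using hend) (fun j => by split_ifs <;> norm_num) (fun j _ => ?_)
  · have := subT_sub_subT μ ((k : ℝ) + 1)
    rw [add_sub_cancel_right, add_assoc, one_add_one_eq_two] at this
    push_cast
    rw [this]
    field_simp
  · have hs : 0 ≤ μ ^ 4 * solT4 j := mul_nonneg (by positivity) (solT4_nonneg j)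
    rcases j with _ | j
    · have := subFluxT_one μ
      push_cast at hs ⊢
      simp only [subFluxT_zero, sub_zero, this]
      gcongr
      linarith
    · have := subFluxT_sub_subFluxT μ ((j + 1 : ℕ) : ℝ)
      simp only [Nat.add_eq_zero_iff, one_ne_zero, and_false, if_false, Nat.add_sub_cancel,
        mul_one]
      push_cast at this hs ⊢
      rw [add_sub_cancel_right] at this
      rw [this]
      gcongr
      linarith

lemma le_markovConst_one (hn : 1 ≤ n) : 0.248549 * (n : ℝ) ^ 2 ≤ markovConst 1 n := by
  have hn0 : (0 : ℝ) < n := by positivity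
  refine (markovModel_one n).le_markovConst (by positivity) normSq_one_derivative_le
    (by positivity) ?_
  obtain rfl | rfl | hn3 : n = 1 ∨ n = 2 ∨ 3 ≤ n := by omega
  · refine ⟨fun j => if j = 0 then 1 else 0, fun j hj => if_neg (by omega), ?_, ?_⟩ <;> norm_num
  · refine ⟨fun j => if j = 1 then 1 else 0, fun j hj => if_neg (by omega), ?_, ?_⟩ <;>
      norm_num [sum_range_succ]
  set μ : ℝ := 1 / (0.248549 * (n : ℝ) ^ 2) ^ 2 with hμ
  have hμ0 : 0 < μ := by positivity
  have hμ1 : μ ≤ 1 / 3 :=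
    (one_div_sq_le (by norm_num) three_pos (by exact_mod_cast hn3)).trans (by norm_num)
  have hend : subU μ ((n : ℝ) + 2) ≤ 0 := subU_nonpos hn3
  refine exists_sum_le_of_subsolution (φ := fun j => subU μ ((j : ℝ) + 1))
    (h := fun i => subU μ i - subU μ ((i : ℝ) + 2)) hn
    (by simp [subU_two]) (fun k => ?_) (fun k => by positivity)
    (by simp [subU_one]) (by simpa [one_add_one_eq_two] using subU_two_pos hμ0.le hμ1)
    (by simpa [add_assoc, one_add_one_eq_two] using hend)
    (fun j => by positivity) (fun j _ => ?_)
  · push_cast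
    rw [one_mul, add_right_comm]
  · have hs : 0 ≤ μ ^ 4 * solU4 ((j + 1 : ℕ) : ℝ) :=
      mul_nonneg (by positivity) (solU4_nonneg (j + 1))
    have key := subU_second_difference μ ((j : ℝ) + 1)
    have hle : 2 * subU μ ((j : ℝ) + 1) - subU μ (j + 1 + 2) - subU μ (j + 1 - 2) ≤
        μ * (4 * ((j : ℝ) + 1) ^ 2) * subU μ (j + 1) := by
      rw [key]
      push_cast at hs
      gcongr
      linarith
    refine (le_of_eq ?_).trans hle
    rcases j with _ | j
    · have := subU_neg μ 1
      norm_num [subU_two] at this ⊢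
      rw [this]
      ring
    · simp only [Nat.add_sub_cancel]
      push_cast
      rw [show (j : ℝ) + 1 + 1 - 2 = j by ring, show (j : ℝ) + 1 + 1 = j + 2 by ring]
      ring

end Bounds

end MarkovChebyshev

theorem markov_chebyshev_bounds (n : ℕ) (hn : 1 ≤ n) :
    0.472135 * (n : ℝ)^2 ≤ markovConst 0 n ∧
    markovConst 0 n ≤ 0.472871 * ((n : ℝ) + 2)^2 ∧
    0.248549 * (n : ℝ)^2 ≤ markovConst 1 n ∧
    markovConst 1 n ≤ 0.250987 * ((n : ℝ) + 4)^2 :=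
  ⟨MarkovChebyshev.le_markovConst_zero hn,
    MarkovChebyshev.markovConst_le (by positivity)
      (MarkovChebyshev.normSq_zero_derivative_le hn),
    MarkovChebyshev.le_markovConst_one hn,
    MarkovChebyshev.markovConst_le (by positivity) MarkovChebyshev.normSq_one_derivative_le⟩
end

section
/- Let λ be a real number with λ ≥ 7 and let n be a natural number with n ≥ 3. Then the best Markov constant c_n(λ) satisfies (1/16)·n(n+2λ)³/λ² ≤ (c_n(λ))² ≤ n(n+2λ)³/λ². -/
open Polynomial Filter

/-- The integral of a polynomial against `(1 - x ^ 2) ^ s` on `[-1, 1]`. -/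
noncomputable def gegIntegral (s : ℝ) (q : ℝ[X]) : ℝ :=
  ∫ x in (-1:ℝ)..1, q.eval x * (1 - x ^ 2) ^ s

/-- The differential operator whose kernel is spanned by the Gegenbauer polynomial of the weight
`(1 - x ^ 2) ^ s` with eigenvalue `μ`. -/
noncomputable def gegOp (s μ : ℝ) (p : ℝ[X]) : ℝ[X] :=
  (1 - X ^ 2) * derivative (derivative p) - C (2 * s + 2) * X * derivative p + C μ * p

lemma continuous_gegWeight {s : ℝ} (hs : 0 ≤ s) :
    Continuous fun x : ℝ => (1 - x ^ 2) ^ s :=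
  Continuous.rpow_const (by fun_prop) fun _ => Or.inr hs

lemma gegIntegrable {s : ℝ} (hs : 0 ≤ s) (q : ℝ[X]) :
    IntervalIntegrable (fun x : ℝ => q.eval x * (1 - x ^ 2) ^ s) MeasureTheory.volume (-1) 1 :=
  (q.continuous.mul (continuous_gegWeight hs)).intervalIntegrable _ _

lemma gegIntegral_add {s : ℝ} (hs : 0 ≤ s) (p q : ℝ[X]) :
    gegIntegral s (p + q) = gegIntegral s p + gegIntegral s q := by
  unfold gegIntegral
  rw [← intervalIntegral.integral_add (gegIntegrable hs p) (gegIntegrable hs q)]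
  simp [add_mul]

lemma gegIntegral_C_mul (s c : ℝ) (q : ℝ[X]) :
    gegIntegral s (C c * q) = c * gegIntegral s q := by
  unfold gegIntegral
  rw [← intervalIntegral.integral_const_mul]
  simp [mul_assoc]

lemma gegIntegral_sub {s : ℝ} (hs : 0 ≤ s) (p q : ℝ[X]) :
    gegIntegral s (p - q) = gegIntegral s p - gegIntegral s q := by
  have h : p - q = p + C (-1) * q := by simp [sub_eq_add_neg]
  rw [h, gegIntegral_add hs, gegIntegral_C_mul]
  ring

lemma gegIntegral_zero (s : ℝ) : gegIntegral s 0 = 0 := by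
  simp [gegIntegral]

lemma one_sub_sq_nonneg_of_mem {x : ℝ} (hx : x ∈ Set.Icc (-1 : ℝ) 1) : 0 ≤ 1 - x ^ 2 := by
  nlinarith [hx.1, hx.2]

lemma gegIntegral_sq_nonneg (s : ℝ) (q : ℝ[X]) : 0 ≤ gegIntegral s (q ^ 2) := by
  refine intervalIntegral.integral_nonneg (by norm_num) fun x hx => ?_
  rw [eval_pow]
  exact mul_nonneg (sq_nonneg _) (Real.rpow_nonneg (one_sub_sq_nonneg_of_mem hx) _)

lemma gegIntegral_sq_pos {s : ℝ} (hs : 0 ≤ s) {q : ℝ[X]} (hq : q ≠ 0) :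
    0 < gegIntegral s (q ^ 2) := by
  obtain ⟨c, hc, hqc⟩ : ∃ c ∈ Set.Ioo (-1 : ℝ) 1, q.eval c ≠ 0 := by
    by_contra! h
    exact hq (Polynomial.eq_zero_of_infinite_isRoot q
      ((Set.Ioo_infinite (by norm_num : (-1 : ℝ) < 1)).mono fun x hx => h x hx))
  refine intervalIntegral.integral_pos (by norm_num)
    ((q ^ 2).continuous.mul (continuous_gegWeight hs)).continuousOn (fun x hx => ?_)
    ⟨c, Set.Ioo_subset_Icc_self hc, ?_⟩
  · rw [eval_pow]
    exact mul_nonneg (sq_nonneg _)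
      (Real.rpow_nonneg (one_sub_sq_nonneg_of_mem (Set.Ioc_subset_Icc_self hx)) _)
  · rw [eval_pow]
    exact mul_pos (by positivity) (Real.rpow_pos_of_pos (by nlinarith [hc.1, hc.2]) _)

lemma gegIntegral_add_one {s : ℝ} (hs : 0 ≤ s) (q : ℝ[X]) :
    gegIntegral (s + 1) q = gegIntegral s ((1 - X ^ 2) * q) := by
  refine intervalIntegral.integral_congr fun x hx => ?_
  rw [Set.uIcc_of_le (by norm_num)] at hx
  simp only [eval_mul, eval_sub, eval_one, eval_pow, eval_X]
  rw [Real.rpow_add_one' (one_sub_sq_nonneg_of_mem hx) (by linarith)]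
  ring

/-- The Pearson equation of the weight, in integrated form. -/
lemma gegIntegral_pearson {s : ℝ} (hs : 0 ≤ s) (f : ℝ[X]) :
    gegIntegral s ((1 - X ^ 2) * derivative f - C (2 * s + 2) * X * f) = 0 := by
  have hderiv : ∀ x ∈ Set.uIcc (-1 : ℝ) 1,
      HasDerivAt (fun x : ℝ => f.eval x * (1 - x ^ 2) ^ (s + 1))
        (((1 - X ^ 2) * derivative f - C (2 * s + 2) * X * f).eval x * (1 - x ^ 2) ^ s) x := by
    intro x hx
    rw [Set.uIcc_of_le (by norm_num)] at hx
    have hw : HasDerivAt (fun x : ℝ => 1 - x ^ 2) (-(2 * x)) x := by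
      simpa using (hasDerivAt_pow 2 x).const_sub 1
    refine ((f.hasDerivAt x).mul
      (hw.rpow_const (p := s + 1) (Or.inr (by linarith)))).congr_deriv ?_
    rw [Real.rpow_add_one' (one_sub_sq_nonneg_of_mem hx) (by linarith), add_sub_cancel_right]
    simp only [eval_mul, eval_sub, eval_one, eval_pow, eval_X, eval_C]
    ring
  unfold gegIntegral
  rw [intervalIntegral.integral_eq_sub_of_hasDerivAt hderiv (gegIntegrable hs _)]
  have h : s + 1 ≠ 0 := by linarith
  simp [Real.zero_rpow h]

/-- Integration by parts for the Gegenbauer operator. -/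
lemma gegIntegral_gegOp_mul {s : ℝ} (hs : 0 ≤ s) (μ : ℝ) (p q : ℝ[X]) :
    gegIntegral s (gegOp s μ p * q) =
      μ * gegIntegral s (p * q) - gegIntegral (s + 1) (derivative p * derivative q) := by
  have h := gegIntegral_pearson hs (derivative p * q)
  have e : (1 - X ^ 2) * derivative (derivative p * q) - C (2 * s + 2) * X * (derivative p * q) =
      (gegOp s μ p * q - C μ * (p * q)) + (1 - X ^ 2) * (derivative p * derivative q) := by
    rw [derivative_mul, gegOp]
    ring
  rw [e, gegIntegral_add hs, gegIntegral_sub hs, gegIntegral_C_mul, ← gegIntegral_add_one hs] at h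
  linarith

lemma gegOp_add (s μ : ℝ) (p q : ℝ[X]) : gegOp s μ (p + q) = gegOp s μ p + gegOp s μ q := by
  simp only [gegOp, derivative_add]
  ring

lemma gegOp_C_mul (s μ c : ℝ) (p : ℝ[X]) : gegOp s μ (C c * p) = C c * gegOp s μ p := by
  simp only [gegOp, derivative_C_mul]
  ring

/-- The eigenvalue of the Gegenbauer operator in degree `n`. -/
noncomputable def gegEigenvalue (s : ℝ) (n : ℕ) : ℝ := n * (n + 2 * s + 1)

lemma gegEigenvalue_strictMono {s : ℝ} (hs : 0 ≤ s) : StrictMono (gegEigenvalue s) := by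
  intro m n hmn
  have h : (m : ℝ) < n := by exact_mod_cast hmn
  have hm : (0 : ℝ) ≤ m := m.cast_nonneg
  unfold gegEigenvalue
  nlinarith

lemma degree_gegOp_X_pow_sub_lt (s μ : ℝ) (m : ℕ) :
    (gegOp s μ (X ^ m) - C (μ - gegEigenvalue s m) * X ^ m).degree < (m : WithBot ℕ) := by
  rcases m with _ | _ | m
  · simp [gegOp, gegEigenvalue]
  · have h : gegOp s μ (X ^ (0 + 1)) - C (μ - gegEigenvalue s (0 + 1)) * X ^ (0 + 1) = 0 := by
      simp only [gegOp, gegEigenvalue]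
      simp [C_ofNat]
      ring
    rw [h, degree_zero]
    exact WithBot.bot_lt_coe _
  · have h : gegOp s μ (X ^ (m + 1 + 1)) - C (μ - gegEigenvalue s (m + 1 + 1)) * X ^ (m + 1 + 1) =
        C (((m : ℝ) + 2) * (m + 1)) * X ^ m := by
      simp only [gegOp, gegEigenvalue, derivative_X_pow, derivative_C_mul]
      simp [C_ofNat]
      ring
    rw [h]
    refine (degree_C_mul_X_pow_le _ _).trans_lt ?_
    exact_mod_cast (by omega : m < m + 1 + 1)

lemma degree_sub_C_mul_lt {m : ℕ} {g h : ℝ[X]} (hg : g.degree < (m + 1 : ℕ))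
    (hh : (h - X ^ m).degree < (m : WithBot ℕ)) :
    (g - C (g.coeff m) * h).degree < (m : WithBot ℕ) := by
  rw [degree_lt_iff_coeff_zero] at *
  intro k hk
  have hk' := hh k hk
  rw [coeff_sub, coeff_X_pow] at hk'
  rw [coeff_sub, coeff_C_mul]
  rcases hk.eq_or_lt with rfl | hlt
  · rw [if_pos rfl] at hk'
    rw [sub_eq_zero.mp hk']
    ring
  · rw [if_neg hlt.ne'] at hk'
    rw [hg k hlt, sub_eq_zero.mp hk']
    ring

/-- Below degree `n` the Gegenbauer operator with the `n`-th eigenvalue is surjective. -/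
lemma exists_gegOp_eq {s : ℝ} (hs : 0 ≤ s) (n m : ℕ) (hmn : m ≤ n) (g : ℝ[X])
    (hg : g.degree < m) : ∃ r : ℝ[X], r.degree < m ∧ gegOp s (gegEigenvalue s n) r = g := by
  induction m generalizing g with
  | zero =>
    refine ⟨0, by simp, ?_⟩
    have : g = 0 := by simpa using hg
    simp [this, gegOp]
  | succ m ih =>
    set d := gegEigenvalue s n - gegEigenvalue s m with hd
    have hd0 : d ≠ 0 := (sub_pos.mpr (gegEigenvalue_strictMono hs hmn)).ne'
    have hX := degree_gegOp_X_pow_sub_lt s (gegEigenvalue s n) m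
    rw [← hd] at hX
    have hcd : (C d⁻¹ : ℝ[X]) * C d = 1 := by rw [← C_mul, inv_mul_cancel₀ hd0, C_1]
    have hlead : (C d⁻¹ * gegOp s (gegEigenvalue s n) (X ^ m) - X ^ m).degree <
        (m : WithBot ℕ) := by
      have e : C d⁻¹ * gegOp s (gegEigenvalue s n) (X ^ m) - X ^ m =
          C d⁻¹ * (gegOp s (gegEigenvalue s n) (X ^ m) - C d * X ^ m) := by
        linear_combination X ^ m * hcd
      rw [e, degree_C_mul (inv_ne_zero hd0)]
      exact hX
    obtain ⟨r, hr, hrg⟩ := ih (by omega) _ (degree_sub_C_mul_lt hg hlead)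
    refine ⟨C (g.coeff m) * (C d⁻¹ * X ^ m) + r, ?_, ?_⟩
    · have hlt : (m : WithBot ℕ) < (m + 1 : ℕ) := by exact_mod_cast Nat.lt_succ_self m
      refine (degree_add_le _ _).trans_lt (max_lt ?_ (hr.trans hlt))
      rw [← mul_assoc, ← C_mul]
      exact (degree_C_mul_X_pow_le _ _).trans_lt hlt
    · rw [gegOp_add, gegOp_C_mul, gegOp_C_mul, hrg]
      ring

/-- Existence of the monic Gegenbauer polynomial of degree `n`. -/
lemma exists_gegenbauer {s : ℝ} (hs : 0 ≤ s) (n : ℕ) :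
    ∃ P : ℝ[X], (P - X ^ n).degree < (n : WithBot ℕ) ∧ gegOp s (gegEigenvalue s n) P = 0 := by
  have hX := degree_gegOp_X_pow_sub_lt s (gegEigenvalue s n) n
  rw [sub_self, C_0, zero_mul, sub_zero] at hX
  obtain ⟨r, hr, hrg⟩ := exists_gegOp_eq hs n n le_rfl (-gegOp s (gegEigenvalue s n) (X ^ n))
    (by rwa [degree_neg])
  refine ⟨X ^ n + r, by rwa [add_sub_cancel_left], ?_⟩
  rw [gegOp_add, hrg, add_neg_cancel]

lemma gegIntegral_gegenbauer_mul {s : ℝ} (hs : 0 ≤ s) {n : ℕ} {P r : ℝ[X]}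
    (hP : gegOp s (gegEigenvalue s n) P = 0) (hr : r.degree < n) :
    gegIntegral s (P * r) = 0 := by
  obtain ⟨g, -, rfl⟩ := exists_gegOp_eq hs n n le_rfl r hr
  have h1 := gegIntegral_gegOp_mul hs (gegEigenvalue s n) g P
  have h2 := gegIntegral_gegOp_mul hs (gegEigenvalue s n) P g
  rw [hP, zero_mul, gegIntegral_zero] at h2
  rw [mul_comm P, h1, mul_comm g, mul_comm (derivative g), ← h2]

/-- The Bernstein-type inequality with the Gegenbauer weight. -/
lemma gegIntegral_bernstein {s : ℝ} (hs : 0 ≤ s) (n : ℕ) (p : ℝ[X]) (hp : p.degree < (n + 1 : ℕ)) :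
    gegIntegral (s + 1) (derivative p ^ 2) ≤ gegEigenvalue s n * gegIntegral s (p ^ 2) := by
  induction n generalizing p with
  | zero =>
    rw [eq_C_of_natDegree_le_zero
      (natDegree_le_iff_coeff_eq_zero.mpr ((degree_lt_iff_coeff_zero _ _).mp hp))]
    simp [gegEigenvalue, gegIntegral_zero]
  | succ n ih =>
    obtain ⟨P, hPdeg, hP⟩ := exists_gegenbauer hs (n + 1)
    set c := p.coeff (n + 1)
    set r := p - C c * P with hr
    have hrdeg : r.degree < (n + 1 : ℕ) := degree_sub_C_mul_lt hp hPdeg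
    have hpr : p = C c * P + r := by rw [hr]; ring
    have hr_le := (ih r hrdeg).trans (mul_le_mul_of_nonneg_right
      (gegEigenvalue_strictMono hs n.lt_succ_self).le (gegIntegral_sq_nonneg s r))
    have horth := gegIntegral_gegenbauer_mul hs hP hrdeg
    have hPr := gegIntegral_gegOp_mul hs (gegEigenvalue s (n + 1)) P r
    have hPP := gegIntegral_gegOp_mul hs (gegEigenvalue s (n + 1)) P P
    rw [hP, zero_mul, gegIntegral_zero] at hPr hPP
    rw [horth] at hPr
    have e1 : derivative p ^ 2 = C (c ^ 2) * (derivative P * derivative P) +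
        (C (2 * c) * (derivative P * derivative r) + derivative r ^ 2) := by
      rw [hpr, derivative_add, derivative_C_mul]
      simp only [C_mul, C_pow, C_ofNat]
      ring
    have e2 : p ^ 2 = C (c ^ 2) * (P * P) + (C (2 * c) * (P * r) + r ^ 2) := by
      rw [hpr]
      simp only [C_mul, C_pow, C_ofNat]
      ring
    have hs1 : 0 ≤ s + 1 := by linarith
    rw [e1, e2]
    simp only [gegIntegral_add hs, gegIntegral_add hs1, gegIntegral_C_mul]
    rw [horth]
    have h1 : gegIntegral (s + 1) (derivative P * derivative r) = 0 := by linarith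
    have h2 : gegIntegral (s + 1) (derivative P * derivative P) =
        gegEigenvalue s (n + 1) * gegIntegral s (P * P) := by linarith
    rw [h1, h2]
    linarith

/-- A Hardy-type inequality comparing consecutive Gegenbauer weights on polynomials. -/
lemma gegIntegral_hardy {s : ℝ} (hs : 0 ≤ s) (θ : ℝ) (m : ℕ) (q : ℝ[X])
    (hq : q.degree < (m + 1 : ℕ)) :
    ((2 * s + 2) * θ - gegEigenvalue s m) * gegIntegral s (q ^ 2) ≤
      ((2 * s + 3) * θ + θ ^ 2) * gegIntegral (s + 1) (q ^ 2) := by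
  have hs1 : 0 ≤ s + 1 := by linarith
  have hB := gegIntegral_bernstein hs m q hq
  have hpear := gegIntegral_pearson hs (X * q ^ 2)
  have e : (1 - X ^ 2) * derivative (X * q ^ 2) - C (2 * s + 2) * X * (X * q ^ 2) =
      (1 - X ^ 2) * (q ^ 2 + C 2 * (X * q * derivative q)) -
        C (2 * s + 2) * (q ^ 2 - (1 - X ^ 2) * q ^ 2) := by
    simp only [derivative_mul, derivative_X, derivative_pow, Nat.cast_ofNat]
    simp only [C_ofNat]
    ring
  rw [e, gegIntegral_sub hs, ← gegIntegral_add_one hs, gegIntegral_C_mul, gegIntegral_sub hs,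
    ← gegIntegral_add_one hs, gegIntegral_add hs1, gegIntegral_C_mul] at hpear
  have hsq := gegIntegral_sq_nonneg (s + 1) (C θ * q - X * derivative q)
  have hX := gegIntegral_sq_nonneg (s + 1 + 1) (derivative q)
  have e2 : (C θ * q - X * derivative q) ^ 2 = C (θ ^ 2) * q ^ 2 +
      (derivative q ^ 2 - (1 - X ^ 2) * derivative q ^ 2) -
        C (2 * θ) * (X * q * derivative q) := by
    simp only [C_mul, C_pow, C_ofNat]
    ring
  rw [e2, gegIntegral_sub hs1, gegIntegral_add hs1, gegIntegral_sub hs1,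
    ← gegIntegral_add_one hs1, gegIntegral_C_mul, gegIntegral_C_mul] at hsq
  linear_combination hsq + hX + hB - θ * hpear

/-- The squared form of the Markov inequality with the Gegenbauer weight. -/
lemma gegIntegral_markov {lam : ℝ} (hlam : 1 / 2 ≤ lam) {n : ℕ} (hn : 1 ≤ n) (p : ℝ[X])
    (hp : p.natDegree ≤ n) :
    gegIntegral (lam - 1 / 2) (derivative p ^ 2) ≤
      n * (n + 2 * lam) ^ 3 / lam ^ 2 * gegIntegral (lam - 1 / 2) (p ^ 2) := by
  obtain ⟨m, rfl⟩ : ∃ m, n = m + 1 := ⟨n - 1, by omega⟩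
  have hs : 0 ≤ lam - 1 / 2 := by linarith
  have hlam0 : 0 < lam := by linarith
  have hp' : p.degree < (m + 1 + 1 : ℕ) :=
    (degree_le_of_natDegree_le hp).trans_lt (by exact_mod_cast Nat.lt_succ_self (m + 1))
  have hq : (derivative p).degree < (m + 1 : ℕ) :=
    (degree_le_of_natDegree_le ((natDegree_derivative_le p).trans (Nat.sub_le_sub_right hp 1))
      ).trans_lt (by exact_mod_cast Nat.lt_succ_self m)
  have hm : (0 : ℝ) ≤ m := m.cast_nonneg
  have hB := gegIntegral_bernstein hs (m + 1) p hp'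
  set K : ℝ := (m + 1 + 2 * lam) / lam with hK
  have hKm : K * lam = m + 1 + 2 * lam := by rw [hK]; field_simp
  have hK2 : 2 ≤ K := by rw [hK, le_div_iff₀ hlam0]; linarith
  set σ : ℝ := m + lam with hσ
  have hσ0 : 0 < σ := by positivity
  have hH := gegIntegral_hardy hs (σ * K) m _ hq
  set A := gegIntegral (lam - 1 / 2) (derivative p ^ 2)
  set B := gegIntegral (lam - 1 / 2 + 1) (derivative p ^ 2)
  have hA0 : 0 ≤ A := gegIntegral_sq_nonneg _ _
  have hB0 : 0 ≤ B := gegIntegral_sq_nonneg _ _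
  have hAB : A ≤ K ^ 2 * B := by
    have hμ : gegEigenvalue (lam - 1 / 2) m ≤ σ ^ 2 := by
      rw [gegEigenvalue, hσ]
      nlinarith
    have h1 : σ * (((2 * lam + 1) * K - σ) * A) ≤ σ * ((2 * lam + 2 + σ * K) * K * B) := by
      nlinarith [mul_le_mul_of_nonneg_right hμ hA0]
    have h2 := le_of_mul_le_mul_left h1 hσ0
    have hσK : σ = lam * K - lam - 1 := by rw [hσ]; linarith
    have hpos : 0 < (2 * lam + 1) * K - σ := by rw [hσK]; nlinarith
    have h3 : (2 * lam + 2 + σ * K) * K ≤ ((2 * lam + 1) * K - σ) * K ^ 2 := by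
      have : 2 * lam + 2 + σ * K ≤ ((2 * lam + 1) * K - σ) * K := by
        rw [hσK]
        nlinarith
      nlinarith
    have h4 : ((2 * lam + 1) * K - σ) * A ≤ ((2 * lam + 1) * K - σ) * (K ^ 2 * B) := by
      nlinarith [mul_le_mul_of_nonneg_right h3 hB0]
    exact le_of_mul_le_mul_left h4 hpos
  calc A ≤ K ^ 2 * B := hAB
    _ ≤ K ^ 2 * (gegEigenvalue (lam - 1 / 2) (m + 1) * gegIntegral (lam - 1 / 2) (p ^ 2)) := by
        gcongr
    _ = _ := by
        rw [hK, gegEigenvalue]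
        push_cast
        field_simp
        ring

/-- The Gegenbauer polynomials of the weight `(1 - x ^ 2) ^ (s + 1)` satisfy a Markov identity
with respect to the weight `(1 - x ^ 2) ^ s`. -/
lemma gegIntegral_derivative_sq_eq {s μ : ℝ} (hs : 0 ≤ s) {p : ℝ[X]}
    (hp : gegOp (s + 1) μ p = 0) :
    (2 * s + 4) * (2 * s + 6) * gegIntegral s (derivative p ^ 2) =
      μ * (2 * μ + (2 * s + 2) * (2 * s + 5)) * gegIntegral s (p ^ 2) := by
  have h := gegIntegral_pearson hs
    (C (μ * (2 * s + 4)) * (p * derivative p) + C (2 * s + 4) * (X * derivative p ^ 2) +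
      C (2 * s + 5 - μ) * ((1 - X ^ 2) * X * derivative p ^ 2 +
        C (2 * s + 3) * ((1 - X ^ 2) * p * derivative p) + C μ * (X * p ^ 2)))
  rw [← sub_eq_zero, ← gegIntegral_C_mul, ← gegIntegral_C_mul, ← gegIntegral_sub hs, ← h]
  congr 1
  simp only [gegOp] at hp
  simp only [derivative_add, derivative_mul, derivative_C, derivative_X, derivative_pow,
    derivative_sub, derivative_one, derivative_ofNat, C_add, C_sub, C_mul, C_ofNat, C_1,
    Nat.cast_ofNat] at hp ⊢
  linear_combination -(C μ * (2 * C s + 4) * p + 2 * (2 * C s + 4) * X * derivative p +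
    (2 * C s + 5 - C μ) * (2 * (1 - X ^ 2) * X * derivative p +
      (2 * C s + 3) * (1 - X ^ 2) * p)) * hp

lemma gegNorm_eval (lam : ℝ) (p : ℝ[X]) :
    gegNorm lam (fun x => p.eval x) = √(gegIntegral (lam - 1 / 2) (p ^ 2)) := by
  simp only [gegNorm, gegIntegral, eval_pow, Real.sqrt_eq_rpow]

theorem markov_bounds_lambda_ge_seven (lam : ℝ) (hlam : 7 ≤ lam) (n : ℕ) (hn : 3 ≤ n) :
    1/16 * ((n : ℝ) * ((n : ℝ) + 2*lam)^3 / lam^2) ≤ (markovConst lam n)^2 ∧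
    (markovConst lam n)^2 ≤ (n : ℝ) * ((n : ℝ) + 2*lam)^3 / lam^2 := by
  set M : ℝ := (n : ℝ) * ((n : ℝ) + 2 * lam) ^ 3 / lam ^ 2 with hM
  have hs : 0 ≤ lam - 1 / 2 := by linarith
  have hM0 : 0 ≤ M := by positivity
  have hub : ∀ r ∈ { r : ℝ | ∃ p : Polynomial ℝ, p ≠ 0 ∧ p.natDegree ≤ n ∧
      r = gegNorm lam (fun x => (Polynomial.derivative p).eval x) /
        gegNorm lam (fun x => p.eval x) }, r ≤ √M := by
    rintro r ⟨p, -, hp, rfl⟩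
    rw [gegNorm_eval, gegNorm_eval]
    refine div_le_of_le_mul₀ (Real.sqrt_nonneg _) (Real.sqrt_nonneg _) ?_
    rw [← Real.sqrt_mul hM0]
    exact Real.sqrt_le_sqrt (gegIntegral_markov (by linarith) (by omega) p hp)
  constructor
  · obtain ⟨P, hPdeg, hP⟩ := exists_gegenbauer (s := lam - 1 / 2 + 1) (by linarith) n
    have hP0 : P ≠ 0 := by
      rintro rfl
      simp at hPdeg
    have hdeg : P.natDegree ≤ n := by
      have h := degree_add_le (P - X ^ n) (X ^ n)
      rw [sub_add_cancel, degree_X_pow] at h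
      exact natDegree_le_of_degree_le (h.trans (max_le hPdeg.le le_rfl))
    have hI := gegIntegral_sq_pos hs hP0
    have hJ := gegIntegral_derivative_sq_eq hs hP
    have hle : gegNorm lam (fun x => (derivative P).eval x) / gegNorm lam (fun x => P.eval x) ≤
        markovConst lam n := le_csSup ⟨√M, hub⟩ ⟨P, hP0, hdeg, rfl⟩
    rw [gegNorm_eval, gegNorm_eval, ← Real.sqrt_div (gegIntegral_sq_nonneg _ _)] at hle
    refine le_trans ?_ (Real.sqrt_le_iff.mp hle).2
    have hn0 : (0 : ℝ) ≤ n := n.cast_nonneg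
    rw [hM, le_div_iff₀ hI]
    set I := gegIntegral (lam - 1 / 2) (P ^ 2)
    set J := gegIntegral (lam - 1 / 2) (derivative P ^ 2)
    have hJ' : J = gegEigenvalue (lam - 1 / 2 + 1) n * (2 * gegEigenvalue (lam - 1 / 2 + 1) n +
        (2 * lam + 1) * (2 * lam + 4)) / ((2 * lam + 3) * (2 * lam + 5)) * I := by
      rw [div_mul_eq_mul_div, eq_div_iff (by positivity)]
      linear_combination hJ
    rw [hJ']
    refine mul_le_mul_of_nonneg_right ?_ hI.le
    have hμ : gegEigenvalue (lam - 1 / 2 + 1) n = n * (n + 2 * lam + 2) := by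
      rw [gegEigenvalue]
      ring
    rw [hμ, le_div_iff₀ (by positivity), ← mul_div_assoc, div_mul_eq_mul_div,
      div_le_iff₀ (by positivity)]
    have h1 : (2 * lam + 3) * (2 * lam + 5) ≤ 8 * lam ^ 2 := by nlinarith
    have h2 : (n + 2 * lam) ^ 2 ≤
        2 * (2 * (n * (n + 2 * lam + 2)) + (2 * lam + 1) * (2 * lam + 4)) := by
      nlinarith [mul_nonneg hn0 (by linarith : 0 ≤ lam)]
    have h3 : n * (n + 2 * lam) ≤ n * (n + 2 * lam + 2) :=
      mul_le_mul_of_nonneg_left (by linarith) hn0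
    calc 1 / 16 * (n * (n + 2 * lam) ^ 3) * ((2 * lam + 3) * (2 * lam + 5))
        = n * (n + 2 * lam) * ((n + 2 * lam) ^ 2 * ((2 * lam + 3) * (2 * lam + 5)) / 16) := by ring
      _ ≤ n * (n + 2 * lam + 2) *
          (2 * (2 * (n * (n + 2 * lam + 2)) + (2 * lam + 1) * (2 * lam + 4)) *
            (8 * lam ^ 2) / 16) := by
          gcongr
      _ = _ := by ring
  · have h0 : 0 ≤ markovConst lam n := by
      refine Real.sSup_nonneg ?_
      rintro r ⟨p, -, -, rfl⟩
      rw [gegNorm_eval, gegNorm_eval]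
      positivity
    calc markovConst lam n ^ 2 ≤ √M ^ 2 := by
          gcongr
          exact Real.sSup_le hub (Real.sqrt_nonneg _)
      _ = M := Real.sq_sqrt hM0
end

section
/- Let λ be a real number with λ > -1/2. Then the best Markov constants for n = 1 and n = 2 are given exactly by (c_1(λ))² = 2(1+λ) and (c_2(λ))² = 4(2+λ)(2+2λ)/(2λ+1). -/
open Polynomial Filter

lemma intervalIntegrable_gegenbauerWeight {a : ℝ} (ha : -1 < a) :
    IntervalIntegrable (fun x : ℝ => (1 - x ^ 2) ^ a) MeasureTheory.volume (-1) 1 := by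
  have right_half : IntervalIntegrable (fun x : ℝ => (1 - x ^ 2) ^ a)
      MeasureTheory.volume 0 1 := by
    have h : IntervalIntegrable (fun x : ℝ => (1 - x) ^ a) MeasureTheory.volume 0 1 := by
      have h := (intervalIntegral.intervalIntegrable_rpow' (a := 0) (b := 1) ha).comp_sub_left 1
      simpa using h.symm
    have hc : ContinuousOn (fun x : ℝ => (1 + x) ^ a) (Set.uIcc 0 1) := by
      rw [Set.uIcc_of_le zero_le_one]
      exact ContinuousOn.rpow_const (by fun_prop) fun x hx => Or.inl (by linarith [hx.1])
    refine (h.mul_continuousOn hc).congr fun x hx => ?_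
    rw [Set.uIoc_of_le zero_le_one] at hx
    rw [← Real.mul_rpow (by linarith [hx.2]) (by linarith [hx.1])]
    ring_nf
  have left_half : IntervalIntegrable (fun x : ℝ => (1 - x ^ 2) ^ a)
      MeasureTheory.volume (-1) 0 := by
    simpa using (right_half.comp_sub_left 0).symm
  exact left_half.trans right_half

lemma intervalIntegrable_mul_gegenbauerWeight {a : ℝ} (ha : -1 < a) {f : ℝ → ℝ}
    (hf : Continuous f) :
    IntervalIntegrable (fun x : ℝ => f x * (1 - x ^ 2) ^ a) MeasureTheory.volume (-1) 1 :=
  (intervalIntegrable_gegenbauerWeight ha).continuousOn_mul hf.continuousOn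

/-- The `k`-th moment of the weight `(1 - x ^ 2) ^ a` on `[-1, 1]`. -/
noncomputable def gegenbauerMoment (a : ℝ) (k : ℕ) : ℝ :=
  ∫ x in (-1:ℝ)..1, x ^ k * (1 - x ^ 2) ^ a

lemma gegenbauerMoment_zero_pos {a : ℝ} (ha : -1 < a) : 0 < gegenbauerMoment a 0 := by
  refine intervalIntegral.intervalIntegral_pos_of_pos_on
    (intervalIntegrable_mul_gegenbauerWeight ha (by fun_prop)) (fun x hx => ?_) (by norm_num)
  have : 0 < 1 - x ^ 2 := by nlinarith [hx.1, hx.2]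
  positivity

/-- Integrating the derivative of `x ^ k * (1 - x ^ 2) ^ (a + 1)`. -/
lemma gegenbauerMoment_succ {a : ℝ} (ha : -1 < a) (k : ℕ) :
    (k + 2 * a + 2) * gegenbauerMoment a (k + 1) = k * gegenbauerMoment a (k - 1) := by
  have hderiv_int := intervalIntegrable_mul_gegenbauerWeight ha
    (f := fun x => k * x ^ (k - 1) - (k + 2 * a + 2) * x ^ (k + 1)) (by fun_prop)
  have key := intervalIntegral.integral_eq_sub_of_hasDerivAt_of_le
    (f := fun x : ℝ => x ^ k * (1 - x ^ 2) ^ (a + 1)) (by norm_num : (-1 : ℝ) ≤ 1)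
    (ContinuousOn.mul (by fun_prop)
      (ContinuousOn.rpow_const (by fun_prop) fun x _ => Or.inr (by linarith)))
    (fun x hx => by
      have hpos : 0 < 1 - x ^ 2 := by nlinarith [hx.1, hx.2]
      have h1 : HasDerivAt (fun x : ℝ => 1 - x ^ 2) (-(2 * x)) x := by
        simpa using (hasDerivAt_pow 2 x).const_sub 1
      have h2 := (hasDerivAt_pow k x).mul (h1.rpow_const (p := a + 1) (Or.inl hpos.ne'))
      refine h2.congr_deriv ?_
      rw [add_sub_cancel_right, Real.rpow_add_one hpos.ne']
      rcases k with _ | k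
      · simp only [Nat.cast_zero, pow_zero]; ring
      · simp only [Nat.add_sub_cancel]; ring) hderiv_int
  have hzero : (0 : ℝ) ^ (a + 1) = 0 := Real.zero_rpow (by linarith)
  simp only [one_pow, neg_one_sq, sub_self, hzero, mul_zero] at key
  have hsplit : (fun x : ℝ => (k * x ^ (k - 1) - (k + 2 * a + 2) * x ^ (k + 1))
      * (1 - x ^ 2) ^ a) = fun x : ℝ => k * (x ^ (k - 1) * (1 - x ^ 2) ^ a)
        - (k + 2 * a + 2) * (x ^ (k + 1) * (1 - x ^ 2) ^ a) := by
    funext x; ring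
  rw [hsplit, intervalIntegral.integral_sub
    ((intervalIntegrable_mul_gegenbauerWeight ha (by fun_prop)).const_mul _)
    ((intervalIntegrable_mul_gegenbauerWeight ha (by fun_prop)).const_mul _),
    intervalIntegral.integral_const_mul, intervalIntegral.integral_const_mul] at key
  unfold gegenbauerMoment
  linarith

/-- The squared weighted norm of the quadratic polynomial `u + v x + w x ^ 2`. -/
lemma integral_quadratic_sq_mul_gegenbauerWeight {lam : ℝ} (hlam : -(1/2 : ℝ) < lam)
    (u v w : ℝ) :
    ∫ x in (-1:ℝ)..1, (u + v * x + w * x ^ 2) ^ 2 * (1 - x ^ 2) ^ (lam - 1/2) =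
      gegenbauerMoment (lam - 1/2) 0 *
        (u ^ 2 + (v ^ 2 + 2 * u * w) / (2 * (lam + 1))
          + 3 * w ^ 2 / ((2 * (lam + 1)) * (2 * (lam + 2)))) := by
  have ha : -1 < lam - 1/2 := by linarith
  have hI (c : ℝ) (k : ℕ) : IntervalIntegrable
      (fun x : ℝ => c * (x ^ k * (1 - x ^ 2) ^ (lam - 1/2))) MeasureTheory.volume (-1) 1 :=
    (intervalIntegrable_mul_gegenbauerWeight ha (by fun_prop)).const_mul c
  have hsplit : (fun x : ℝ => (u + v * x + w * x ^ 2) ^ 2 * (1 - x ^ 2) ^ (lam - 1/2)) =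
      fun x : ℝ => u ^ 2 * (x ^ 0 * (1 - x ^ 2) ^ (lam - 1/2))
        + 2 * u * v * (x ^ 1 * (1 - x ^ 2) ^ (lam - 1/2))
        + (v ^ 2 + 2 * u * w) * (x ^ 2 * (1 - x ^ 2) ^ (lam - 1/2))
        + 2 * v * w * (x ^ 3 * (1 - x ^ 2) ^ (lam - 1/2))
        + w ^ 2 * (x ^ 4 * (1 - x ^ 2) ^ (lam - 1/2)) := by
    funext x; ring
  rw [hsplit, intervalIntegral.integral_add
      ((((hI _ _).add (hI _ _)).add (hI _ _)).add (hI _ _)) (hI _ _),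
    intervalIntegral.integral_add (((hI _ _).add (hI _ _)).add (hI _ _)) (hI _ _),
    intervalIntegral.integral_add ((hI _ _).add (hI _ _)) (hI _ _),
    intervalIntegral.integral_add (hI _ _) (hI _ _)]
  simp only [intervalIntegral.integral_const_mul]
  change u ^ 2 * gegenbauerMoment _ 0 + 2 * u * v * gegenbauerMoment _ 1
    + (v ^ 2 + 2 * u * w) * gegenbauerMoment _ 2 + 2 * v * w * gegenbauerMoment _ 3
    + w ^ 2 * gegenbauerMoment _ 4 = _
  have h1 := gegenbauerMoment_succ ha 0
  have h2 := gegenbauerMoment_succ ha 1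
  have h3 := gegenbauerMoment_succ ha 2
  have h4 := gegenbauerMoment_succ ha 3
  norm_num at h1 h2 h3 h4
  have m1 : gegenbauerMoment (lam - 1/2) 1 = 0 :=
    h1.resolve_left (by linarith)
  rw [m1, mul_zero, mul_eq_zero] at h3
  have m3 : gegenbauerMoment (lam - 1/2) 3 = 0 :=
    h3.resolve_left (by linarith)
  have p2 : lam + 1 ≠ 0 := by linarith
  have p4 : lam + 2 ≠ 0 := by linarith
  have m2 : gegenbauerMoment (lam - 1/2) 2 = gegenbauerMoment (lam - 1/2) 0 / (2 * (lam + 1)) := by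
    rw [eq_div_iff (by positivity)]; linarith
  have m4 : gegenbauerMoment (lam - 1/2) 4 =
      3 * gegenbauerMoment (lam - 1/2) 2 / (2 * (lam + 2)) := by
    rw [eq_div_iff (by positivity)]; linarith
  rw [m1, m3, m4, m2]
  field_simp
  ring

lemma integral_eval_sq_mul_gegenbauerWeight {lam : ℝ} (hlam : -(1/2 : ℝ) < lam)
    {p : ℝ[X]} (hp : p.natDegree ≤ 2) :
    ∫ x in (-1:ℝ)..1, (p.eval x) ^ 2 * (1 - x ^ 2) ^ (lam - 1/2) =
      gegenbauerMoment (lam - 1/2) 0 *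
        (p.coeff 0 ^ 2 + (p.coeff 1 ^ 2 + 2 * p.coeff 0 * p.coeff 2) / (2 * (lam + 1))
          + 3 * p.coeff 2 ^ 2 / ((2 * (lam + 1)) * (2 * (lam + 2)))) := by
  rw [← integral_quadratic_sq_mul_gegenbauerWeight hlam]
  simp [Polynomial.eval_eq_sum_range' (Nat.lt_succ_of_le hp), Finset.sum_range_succ]

lemma integral_derivative_eval_sq_mul_gegenbauerWeight {lam : ℝ} (hlam : -(1/2 : ℝ) < lam)
    {p : ℝ[X]} (hp : p.natDegree ≤ 2) :
    ∫ x in (-1:ℝ)..1, ((derivative p).eval x) ^ 2 * (1 - x ^ 2) ^ (lam - 1/2) =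
      gegenbauerMoment (lam - 1/2) 0 *
        (p.coeff 1 ^ 2 + 4 * p.coeff 2 ^ 2 / (2 * (lam + 1))) := by
  have h3 : p.coeff 3 = 0 := Polynomial.coeff_eq_zero_of_natDegree_lt (by omega)
  rw [integral_eval_sq_mul_gegenbauerWeight hlam
    ((Polynomial.natDegree_derivative_le p).trans (by omega))]
  simp only [Polynomial.coeff_derivative, h3]
  norm_num
  left
  ring

lemma gegNorm_eq_sqrt (lam : ℝ) (f : ℝ → ℝ) :
    gegNorm lam f = √(∫ x in (-1:ℝ)..1, (f x) ^ 2 * (1 - x ^ 2) ^ (lam - 1/2)) :=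
  (Real.sqrt_eq_rpow _).symm

lemma gegNorm_sq_integral_nonneg (lam : ℝ) (f : ℝ → ℝ) :
    0 ≤ ∫ x in (-1:ℝ)..1, (f x) ^ 2 * (1 - x ^ 2) ^ (lam - 1/2) := by
  refine intervalIntegral.integral_nonneg (by norm_num) fun x hx => ?_
  have : 0 ≤ 1 - x ^ 2 := by nlinarith [hx.1, hx.2]
  positivity

/-- A bound for the squared norms that is attained by some polynomial is the square of the
Markov constant. -/
lemma markovConst_sq_eq {lam K : ℝ} {n : ℕ} (hK : 0 ≤ K)
    (hle : ∀ p : ℝ[X], p.natDegree ≤ n →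
      ∫ x in (-1:ℝ)..1, ((derivative p).eval x) ^ 2 * (1 - x ^ 2) ^ (lam - 1/2) ≤
        K * ∫ x in (-1:ℝ)..1, (p.eval x) ^ 2 * (1 - x ^ 2) ^ (lam - 1/2))
    {q : ℝ[X]} (hq : q.natDegree ≤ n)
    (hq0 : ∫ x in (-1:ℝ)..1, (q.eval x) ^ 2 * (1 - x ^ 2) ^ (lam - 1/2) ≠ 0)
    (heq : ∫ x in (-1:ℝ)..1, ((derivative q).eval x) ^ 2 * (1 - x ^ 2) ^ (lam - 1/2) =
        K * ∫ x in (-1:ℝ)..1, (q.eval x) ^ 2 * (1 - x ^ 2) ^ (lam - 1/2)) :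
    markovConst lam n ^ 2 = K := by
  have hgreatest : IsGreatest { r : ℝ | ∃ p : Polynomial ℝ, p ≠ 0 ∧ p.natDegree ≤ n ∧
      r = gegNorm lam (fun x => (Polynomial.derivative p).eval x) /
        gegNorm lam (fun x => p.eval x) } √K := by
    refine ⟨⟨q, ?_, hq, ?_⟩, ?_⟩
    · rintro rfl
      simp at hq0
    · rw [gegNorm_eq_sqrt, gegNorm_eq_sqrt, ← Real.sqrt_div (gegNorm_sq_integral_nonneg _ _),
        heq, mul_div_cancel_right₀ _ hq0]
    · rintro r ⟨p, -, hp, rfl⟩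
      rw [gegNorm_eq_sqrt, gegNorm_eq_sqrt, ← Real.sqrt_div (gegNorm_sq_integral_nonneg _ _)]
      exact Real.sqrt_le_sqrt
        (div_le_of_le_mul₀ (gegNorm_sq_integral_nonneg _ _) hK (hle p hp))
  rw [markovConst, hgreatest.csSup_eq, Real.sq_sqrt hK]

theorem markov_constant_n_one_two (lam : ℝ) (hlam : -(1/2 : ℝ) < lam) :
    (markovConst lam 1)^2 = 2 * (1 + lam) ∧
    (markovConst lam 2)^2 = 4 * (2 + lam) * (2 + 2*lam) / (2*lam + 1) := by
  have hm := gegenbauerMoment_zero_pos (a := lam - 1/2) (by linarith)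
  have p1 : 0 < 2 * lam + 1 := by linarith
  have p2 : 0 < lam + 1 := by linarith
  have p3 : 0 < lam + 2 := by linarith
  have e1 : 1 + lam = lam + 1 := by ring
  have e2 : 4 * (2 + lam) * (2 + 2 * lam) = 8 * (lam + 2) * (lam + 1) := by ring
  rw [e1, e2]
  have hm0 := hm.ne'
  have hp1 : lam * 2 + 1 ≠ 0 := by linarith
  constructor
  · refine markovConst_sq_eq (q := X) (by positivity) (fun p hp => ?_) (by simp) ?_ ?_
    · have h2 : p.coeff 2 = 0 := Polynomial.coeff_eq_zero_of_natDegree_lt (by omega)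
      rw [integral_derivative_eval_sq_mul_gegenbauerWeight hlam (by omega),
        integral_eval_sq_mul_gegenbauerWeight hlam (by omega), mul_left_comm, h2]
      gcongr
      have : 2 * (lam + 1) * (p.coeff 0 ^ 2 + (p.coeff 1 ^ 2 + 2 * p.coeff 0 * 0) / (2 * (lam + 1))
          + 3 * 0 ^ 2 / ((2 * (lam + 1)) * (2 * (lam + 2)))) =
          2 * (lam + 1) * p.coeff 0 ^ 2 + p.coeff 1 ^ 2 := by
        field_simp
        ring
      rw [this]
      have : 0 ≤ 2 * (lam + 1) * p.coeff 0 ^ 2 := by positivity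
      simpa using this
    · rw [integral_eval_sq_mul_gegenbauerWeight hlam (by simp)]
      generalize gegenbauerMoment (lam - 1/2) 0 = m at hm0 ⊢
      simp [Polynomial.coeff_X, hm0, p2.ne']
    · rw [integral_derivative_eval_sq_mul_gegenbauerWeight hlam (by simp),
        integral_eval_sq_mul_gegenbauerWeight hlam (by simp)]
      generalize gegenbauerMoment (lam - 1/2) 0 = m
      simp [Polynomial.coeff_X]
      field_simp
  · have hdeg : (X ^ 2 - C (1 / (2 * (lam + 1))) : ℝ[X]).natDegree ≤ 2 := by compute_degree
    refine markovConst_sq_eq (q := X ^ 2 - C (1 / (2 * (lam + 1)))) (by positivity)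
      (fun p hp => ?_) hdeg ?_ ?_
    · rw [integral_derivative_eval_sq_mul_gegenbauerWeight hlam hp,
        integral_eval_sq_mul_gegenbauerWeight hlam hp, mul_left_comm]
      gcongr
      rw [← sub_nonneg]
      have : 8 * (lam + 2) * (lam + 1) / (2 * lam + 1) *
          (p.coeff 0 ^ 2 + (p.coeff 1 ^ 2 + 2 * p.coeff 0 * p.coeff 2) / (2 * (lam + 1))
            + 3 * p.coeff 2 ^ 2 / ((2 * (lam + 1)) * (2 * (lam + 2))))
          - (p.coeff 1 ^ 2 + 4 * p.coeff 2 ^ 2 / (2 * (lam + 1))) =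
          8 * (lam + 2) * (lam + 1) / (2 * lam + 1) *
            (p.coeff 0 + p.coeff 2 / (2 * (lam + 1))) ^ 2
          + (2 * lam + 1 + 6) / (2 * lam + 1) * p.coeff 1 ^ 2 := by
        field_simp
        ring
      rw [this]
      positivity
    · rw [integral_eval_sq_mul_gegenbauerWeight hlam hdeg]
      have : (1 / (2 * (lam + 1))) ^ 2 +
            (0 ^ 2 + 2 * (-(1 / (2 * (lam + 1)))) * 1) / (2 * (lam + 1))
          + 3 * 1 ^ 2 / ((2 * (lam + 1)) * (2 * (lam + 2))) =
          (4 * lam + 2) / ((2 * (lam + 1)) ^ 2 * (2 * (lam + 2))) := by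
        field_simp
        ring
      have hpos : 0 < (4 * lam + 2) / ((2 * (lam + 1)) ^ 2 * (2 * (lam + 2))) :=
        div_pos (by linarith) (by positivity)
      rw [← this] at hpos
      simpa [Polynomial.coeff_C] using (mul_pos hm hpos).ne'
    · rw [integral_derivative_eval_sq_mul_gegenbauerWeight hlam hdeg,
        integral_eval_sq_mul_gegenbauerWeight hlam hdeg]
      generalize gegenbauerMoment (lam - 1/2) 0 = m
      simp [Polynomial.coeff_C]
      field_simp
      ring
end
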